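/- arXiv:1201.3039 — 4 statements merged into one kernel-verified Lean document; each statement's English description precedes it below -/
import Mathlib

section
/- Let x₁, …, xₙ ∈ R and let Y be a chain complex of R-modules with H_i(Y) = 0 for all i < i₀. Then H_i(K^R(x₁,…,xₙ) ⊗_R Y) = 0 for all i < i₀, and H_{i₀}(K^R(x₁,…,xₙ) ⊗_R Y) ≅ H_{i₀}(Y)/(x₁,…,xₙ)H_{i₀}(Y). -/
open CategoryTheory CategoryTheory.Limits MonoidalCategory

noncomputable section

variable (R : Type) [CommRing R]

/- Instances making `CochainComplex (ModuleCat R) ℤ` into a monoidal category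
(the tensor product of complexes). -/

instance (X : ModuleCat R) : PreservesColimits (tensorRight X) :=
  preservesColimits_of_natIso
    (F := tensorLeft X) (NatIso.ofComponents (fun Y => β_ X Y) (by intros; simp))

instance : (curriedTensor (ModuleCat R)).Additive where
  map_add := by intros; ext Z : 2; simp [curriedTensor, MonoidalPreadditive.add_whiskerRight]

instance (X : ModuleCat R) : ((curriedTensor (ModuleCat R)).obj X).Additive :=
  inferInstanceAs (tensorLeft X).Additive

instance (X : ModuleCat R) :
    PreservesColimit (Functor.empty.{0} (ModuleCat R)) ((curriedTensor (ModuleCat R)).obj X) :=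
  inferInstanceAs (PreservesColimit _ (tensorLeft X))

instance (X : ModuleCat R) :
    PreservesColimit (Functor.empty.{0} (ModuleCat R))
      ((curriedTensor (ModuleCat R)).flip.obj X) :=
  inferInstanceAs (PreservesColimit _ (tensorRight X))

instance (X₁ X₂ X₃ : GradedObject ℤ (ModuleCat R)) :
    GradedObject.HasGoodTensor₁₂Tensor X₁ X₂ X₃ :=
  fun _ i₃ => inferInstanceAs (PreservesColimit _ (tensorRight (X₃ i₃)))

instance (X₁ X₂ X₃ : GradedObject ℤ (ModuleCat R)) :
    GradedObject.HasGoodTensorTensor₂₃ X₁ X₂ X₃ :=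
  fun i₁ _ => inferInstanceAs (PreservesColimit _ (tensorLeft (X₁ i₁)))

instance (X₁ X₂ X₃ X₄ : GradedObject ℤ (ModuleCat R)) :
    GradedObject.HasTensor₄ObjExt X₁ X₂ X₃ X₄ :=
  fun i₁ _ => inferInstanceAs (PreservesColimit _ (tensorLeft (X₁ i₁)))

/-- The Koszul complex `K^R(x)` on a single element: the mapping cone of multiplication by
`x` on the unit complex (`R` concentrated in degree `0`); it has `R` in (chain) degrees `0`
and `1`. -/
def koszulOne (x : R) : CochainComplex (ModuleCat R) ℤ :=
  CochainComplex.mappingCone (x • 𝟙 (𝟙_ (CochainComplex (ModuleCat R) ℤ)))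

/-- The Koszul complex `K^R(x₁, …, xₙ)` on a sequence (here a list) of elements of `R`,
defined inductively as a tensor product of the Koszul complexes of the individual elements,
`K^R(x₁,…,xₙ) = K^R(x₁,…,x_{n-1}) ⊗ K^R(xₙ)`. -/
def koszul : List R → CochainComplex (ModuleCat R) ℤ
  | [] => 𝟙_ _
  | x :: xs => koszul xs ⊗ koszulOne R x

/-! Tensoring a degreewise split short exact sequence of complexes with `Y` keeps it degreewise
split, because the splittings need only be maps of graded objects.  Applied to
`0 ⟶ L ⟶ cone φ ⟶ K⟦1⟧ ⟶ 0` this gives a long exact sequence in homology.  Its connecting map is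
identified by naturality: it is compared with the same sequence for `𝟙 K`, whose middle term is
contractible, so that its connecting maps are isomorphisms, and no signs have to be tracked.
For `K = L = 𝟙_` and `φ = x • 𝟙` the vanishing of `Hⁿ⁺¹(Y)` identifies `Hⁿ(K(x) ⊗ Y)` with
`Hⁿ(Y) / x Hⁿ(Y)`, and the general case follows by induction, absorbing one factor `K(x)` at a
time into `Y`. -/

section GradedMap

open HomologicalComplex

variable {C₁ C₂ D I₁ I₂ J : Type*} [Category* C₁] [Category* C₂] [Category* D]
  [HasZeroMorphisms C₁] [HasZeroMorphisms C₂] [Preadditive D]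
  {c₁ : ComplexShape I₁} {c₂ : ComplexShape I₂} {c : ComplexShape J}
  [TotalComplexShape c₁ c₂ c] [DecidableEq J]
  (F : C₁ ⥤ C₂ ⥤ D) [F.PreservesZeroMorphisms] [∀ X, (F.obj X).PreservesZeroMorphisms]
  [∀ (K₁ : HomologicalComplex C₁ c₁) (K₂ : HomologicalComplex C₂ c₂), HasMapBifunctor K₁ K₂ F c]
  {K L M : HomologicalComplex C₁ c₁} (Y : HomologicalComplex C₂ c₂)

/-- The map `F(φ, Y)` in degree `j` between total complexes induced by a family
`φ : ∀ i, K.X i ⟶ L.X i` which need not commute with the differentials, so that it also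
applies to degreewise splittings. -/
def mapBifunctorGradedMap (φ : ∀ i, K.X i ⟶ L.X i) (j : J) :
    (mapBifunctor K Y F c).X j ⟶ (mapBifunctor L Y F c).X j :=
  mapBifunctorDesc fun i₁ i₂ h => (F.map (φ i₁)).app (Y.X i₂) ≫ ιMapBifunctor L Y F c i₁ i₂ j h

lemma ι_mapBifunctorGradedMap (φ : ∀ i, K.X i ⟶ L.X i) (i₁ : I₁) (i₂ : I₂) (j : J)
    (h : ComplexShape.π c₁ c₂ c (i₁, i₂) = j) :
    ιMapBifunctor K Y F c i₁ i₂ j h ≫ mapBifunctorGradedMap F Y φ j =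
      (F.map (φ i₁)).app (Y.X i₂) ≫ ιMapBifunctor L Y F c i₁ i₂ j h := by
  simp [mapBifunctorGradedMap]

lemma mapBifunctorGradedMap_id (j : J) :
    mapBifunctorGradedMap F Y (c := c) (fun i => 𝟙 (K.X i)) j = 𝟙 _ := by
  ext
  simp [ι_mapBifunctorGradedMap]

lemma mapBifunctorGradedMap_comp (φ : ∀ i, K.X i ⟶ L.X i) (ψ : ∀ i, L.X i ⟶ M.X i) (j : J) :
    mapBifunctorGradedMap F Y (c := c) (fun i => φ i ≫ ψ i) j =
      mapBifunctorGradedMap F Y φ j ≫ mapBifunctorGradedMap F Y ψ j := by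
  ext
  simp [ι_mapBifunctorGradedMap, reassoc_of% (ι_mapBifunctorGradedMap F Y φ)]

lemma mapBifunctorMap_id_f (f : K ⟶ L) (j : J) :
    (mapBifunctorMap f (𝟙 Y) F c).f j = mapBifunctorGradedMap F Y f.f j := by
  ext
  simp [ι_mapBifunctorGradedMap]

end GradedMap

section Additive

open HomologicalComplex

variable {C₁ C₂ D I₁ I₂ J : Type*} [Category* C₁] [Category* C₂] [Category* D]
  [Preadditive C₁] [HasZeroMorphisms C₂] [Preadditive D]
  {c₁ : ComplexShape I₁} {c₂ : ComplexShape I₂} {c : ComplexShape J}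
  [TotalComplexShape c₁ c₂ c] [DecidableEq J]
  (F : C₁ ⥤ C₂ ⥤ D) [F.Additive] [∀ X, (F.obj X).PreservesZeroMorphisms]
  [∀ (K₁ : HomologicalComplex C₁ c₁) (K₂ : HomologicalComplex C₂ c₂), HasMapBifunctor K₁ K₂ F c]
  {K L : HomologicalComplex C₁ c₁} (Y : HomologicalComplex C₂ c₂)

lemma mapBifunctorGradedMap_add (φ ψ : ∀ i, K.X i ⟶ L.X i) (j : J) :
    mapBifunctorGradedMap F Y (c := c) (fun i => φ i + ψ i) j =
      mapBifunctorGradedMap F Y φ j + mapBifunctorGradedMap F Y ψ j := by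
  ext
  simp [ι_mapBifunctorGradedMap]

lemma mapBifunctorGradedMap_smul {k : Type*} [Semiring k] [Linear k C₁] [Linear k D] [F.Linear k]
    (r : k) (φ : ∀ i, K.X i ⟶ L.X i) (j : J) :
    mapBifunctorGradedMap F Y (c := c) (fun i => r • φ i) j =
      r • mapBifunctorGradedMap F Y φ j := by
  ext
  simp [ι_mapBifunctorGradedMap]

instance : ((F.map₂HomologicalComplex c₁ c₂ c).flip.obj Y).Additive where
  map_add {_ _ f g} := by
    ext1 j
    exact (mapBifunctorMap_id_f F Y (f + g) j).trans
      ((mapBifunctorGradedMap_add F Y f.f g.f j).trans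
        (congrArg₂ (· + ·) (mapBifunctorMap_id_f F Y f j) (mapBifunctorMap_id_f F Y g j)).symm)

instance {k : Type*} [Semiring k] [Linear k C₁] [Linear k D] [F.Linear k] :
    ((F.map₂HomologicalComplex c₁ c₂ c).flip.obj Y).Linear k where
  map_smul f r := by
    ext1 j
    exact (mapBifunctorMap_id_f F Y (r • f) j).trans
      ((mapBifunctorGradedMap_smul F Y r f.f j).trans
        (congrArg (r • ·) (mapBifunctorMap_id_f F Y f j)).symm)

/-- The splitting of `F(S, Y)` in degree `j` induced by degreewise splittings of `S`. -/
def mapBifunctorSplitting {S : ShortComplex (HomologicalComplex C₁ c₁)}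
    (σ : ∀ i, (S.map (eval C₁ c₁ i)).Splitting) (j : J) :
    ((S.map ((F.map₂HomologicalComplex c₁ c₂ c).flip.obj Y)).map (eval D c j)).Splitting :=
  let r (i : I₁) : S.X₂.X i ⟶ S.X₁.X i := (σ i).r
  let s (i : I₁) : S.X₃.X i ⟶ S.X₂.X i := (σ i).s
  have f_r : (mapBifunctorMap S.f (𝟙 Y) F c).f j ≫ mapBifunctorGradedMap F Y r j = 𝟙 _ := by
    rw [mapBifunctorMap_id_f, ← mapBifunctorGradedMap_comp, ← mapBifunctorGradedMap_id]
    exact congrArg (mapBifunctorGradedMap F Y · j) (funext fun i => (σ i).f_r)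
  have s_g : mapBifunctorGradedMap F Y s j ≫ (mapBifunctorMap S.g (𝟙 Y) F c).f j = 𝟙 _ := by
    rw [mapBifunctorMap_id_f, ← mapBifunctorGradedMap_comp, ← mapBifunctorGradedMap_id]
    exact congrArg (mapBifunctorGradedMap F Y · j) (funext fun i => (σ i).s_g)
  have id : mapBifunctorGradedMap F Y r j ≫ (mapBifunctorMap S.f (𝟙 Y) F c).f j +
      (mapBifunctorMap S.g (𝟙 Y) F c).f j ≫ mapBifunctorGradedMap F Y s j = 𝟙 _ := by
    rw [mapBifunctorMap_id_f, mapBifunctorMap_id_f, ← mapBifunctorGradedMap_comp,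
      ← mapBifunctorGradedMap_comp, ← mapBifunctorGradedMap_add, ← mapBifunctorGradedMap_id]
    exact congrArg (mapBifunctorGradedMap F Y · j) (funext fun i => (σ i).id)
  { r := _, s := _, f_r := f_r, s_g := s_g, id := id }

end Additive

section Cone

open HomologicalComplex CochainComplex CochainComplex.mappingCone

variable {C D : Type*} [Category* C] [Category* D] [Preadditive C] [HasBinaryBiproducts C]
  {K L : CochainComplex C ℤ}

/-- The morphism from the short complex `K ⟶ cone (𝟙 K) ⟶ K⟦1⟧` to
`L ⟶ cone φ ⟶ K⟦1⟧` given by `φ` on the first term and the identity on the third. -/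
def triangleRotateShortComplexOfId (φ : K ⟶ L) :
    triangleRotateShortComplex (𝟙 K) ⟶ triangleRotateShortComplex φ where
  τ₁ := φ
  τ₂ := mappingCone.map (𝟙 K) φ (𝟙 K) φ rfl
  τ₃ := 𝟙 _
  comm₁₂ := (triangleMap (𝟙 K) φ (𝟙 K) φ rfl).comm₂.symm
  comm₂₃ := by
    refine (triangleMap (𝟙 K) φ (𝟙 K) φ rfl).comm₃.symm.trans ?_
    change _ ≫ (𝟙 K)⟦(1 : ℤ)⟧' = _ ≫ 𝟙 _
    rw [CategoryTheory.Functor.map_id]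
    rfl

variable [Abelian D]

/-- Functors on cochain complexes which turn mapping cones into long exact sequences: the
sequences `0 ⟶ L ⟶ cone φ ⟶ K⟦1⟧ ⟶ 0` stay short exact, and cones of identities become
acyclic.  This is what the argument needs to know about `- ⊗ Y`. -/
class PreservesConeSequences (G : CochainComplex C ℤ ⥤ CochainComplex D ℤ)
    [G.PreservesZeroMorphisms] : Prop where
  shortExact {K L : CochainComplex C ℤ} (φ : K ⟶ L) :
    ((triangleRotateShortComplex φ).map G).ShortExact
  acyclic (K : CochainComplex C ℤ) : (G.obj (mappingCone (𝟙 K))).Acyclic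

instance {C₂ : Type*} [Category* C₂] [Preadditive C₂] (F : C ⥤ C₂ ⥤ D) [F.Additive]
    [∀ X, (F.obj X).Additive]
    [∀ (K₁ : CochainComplex C ℤ) (K₂ : CochainComplex C₂ ℤ),
      HasMapBifunctor K₁ K₂ F (ComplexShape.up ℤ)] (Y : CochainComplex C₂ ℤ) :
    PreservesConeSequences (F.map₂CochainComplex.flip.obj Y) where
  shortExact φ := shortExact_of_degreewise_shortExact _ fun n =>
    (mapBifunctorSplitting F Y (triangleRotateShortComplexSplitting φ) n).shortExact
  acyclic K n := by
    let G := F.map₂CochainComplex.flip.obj Y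
    have h : Homotopy (G.map (𝟙 (mappingCone (𝟙 K)))) (G.map 0) :=
      mapBifunctorMapHomotopy₁ (homotopyToZeroOfId K) (𝟙 Y) F (ComplexShape.up ℤ)
    rw [CategoryTheory.Functor.map_id, CategoryTheory.Functor.map_zero] at h
    rw [exactAt_iff_isZero_homology, IsZero.iff_id_eq_zero, ← homologyMap_id, h.homologyMap_eq,
      homologyMap_zero]

namespace PreservesConeSequences

variable (G : CochainComplex C ℤ ⥤ CochainComplex D ℤ) [G.PreservesZeroMorphisms]
  [PreservesConeSequences G]

variable (K) in
/-- The suspension isomorphism `Hⁱ(G(K⟦1⟧)) ≅ Hⁱ⁺¹(G(K))`, defined as the connecting map for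
the cone of `𝟙 K`. -/
def homologyShiftIso {i j : ℤ} (hij : i + 1 = j) :
    (G.obj (K⟦(1 : ℤ)⟧)).homology i ≅ (G.obj K).homology j :=
  (shortExact (G := G) (𝟙 K)).δIso i j hij (acyclic K i).isZero_homology
    (acyclic K j).isZero_homology

lemma δ_eq_homologyShiftIso_hom_comp (φ : K ⟶ L) {i j : ℤ} (hij : i + 1 = j) :
    (shortExact (G := G) φ).δ i j hij =
      (homologyShiftIso K G hij).hom ≫ homologyMap (G.map φ) j := by
  have naturality := HomologySequence.δ_naturality
    (G.mapShortComplex.map (triangleRotateShortComplexOfId φ))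
    (shortExact (𝟙 K)) (shortExact φ) i j hij
  have map_id : homologyMap (G.map (𝟙 (K⟦(1 : ℤ)⟧))) i = 𝟙 _ := by
    rw [CategoryTheory.Functor.map_id, homologyMap_id]
  exact (naturality.trans ((congrArg (· ≫ _) map_id).trans (Category.id_comp _))).symm

lemma homologyMap_comp_homologyMap_inr (φ : K ⟶ L) (n : ℤ) :
    homologyMap (G.map φ) n ≫ homologyMap (G.map (inr φ)) n = 0 := by
  rw [← cancel_epi (homologyShiftIso K G (sub_add_cancel n 1)).hom, ← Category.assoc,
    ← δ_eq_homologyShiftIso_hom_comp, comp_zero]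
  exact (shortExact φ).δ_comp (n - 1) n (by simp)

lemma exact_homologyMap_inr (φ : K ⟶ L) (n : ℤ) :
    (ShortComplex.mk _ _ (homologyMap_comp_homologyMap_inr G φ n)).Exact := by
  have hn : n - 1 + 1 = n := sub_add_cancel n 1
  refine ShortComplex.exact_of_iso ?_ ((shortExact (G := G) φ).homology_exact₁ (n - 1) n hn)
  exact ShortComplex.isoMk (homologyShiftIso K G hn) (Iso.refl _) (Iso.refl _)
    ((δ_eq_homologyShiftIso_hom_comp G φ hn).symm.trans (Category.comp_id _).symm)
    ((Category.id_comp _).trans (Category.comp_id _).symm)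

lemma epi_homologyMap_inr (φ : K ⟶ L) (n : ℤ) (h : IsZero ((G.obj K).homology (n + 1))) :
    Epi (homologyMap (G.map (inr φ)) n) :=
  ((shortExact φ).homology_exact₂ n).epi_f ((h.of_iso (homologyShiftIso K G rfl)).eq_of_tgt _ _)

end PreservesConeSequences

end Cone

lemma homologyMap_smul {k C ι : Type*} [Category* C] [Preadditive C] [Semiring k] [Linear k C]
    {c : ComplexShape ι} {K L : HomologicalComplex C c} (i : ι) [K.HasHomology i]
    [L.HasHomology i] (r : k) (f : K ⟶ L) :
    HomologicalComplex.homologyMap (r • f) i = r • HomologicalComplex.homologyMap f i :=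
  ShortComplex.homologyMap_smul ((HomologicalComplex.shortComplexFunctor _ _ i).map f) r

section Homology

open HomologicalComplex CochainComplex

universe v

variable {A : Type*} [CommRing A]

/-- An isomorphism of complexes of modules induces linear equivalences on homology. -/
def homologyLinearEquiv {ι : Type*} {c : ComplexShape ι}
    {K L : HomologicalComplex (ModuleCat.{v} A) c} (e : K ≅ L) (i : ι) :
    K.homology i ≃ₗ[A] L.homology i :=
  ((homologyFunctor _ _ i).mapIso e).toLinearEquiv

/-- The target of an epimorphism `g` for which `M ⟶ M ⟶ N`, given by `x` and `g`, is exact, is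
`M / x M`. -/
def quotSMulTopEquivOfExact {M N : ModuleCat.{v} A} {x : A} {g : M ⟶ N}
    {w : (x • 𝟙 M) ≫ g = 0} (h : (ShortComplex.mk _ _ w).Exact) [Epi g] :
    N ≃ₗ[A] QuotSMulTop x M :=
  (h.gIsCokernel.coconePointUniqueUpToIso
    (M.smulShortComplex_exact x).gIsCokernel).toLinearEquiv

/-- The homology of the cone of multiplication by `x`:
`Hⁿ(G(cone x)) ≃ Hⁿ(G(K)) / x Hⁿ(G(K))` if `Hⁿ⁺¹(G(K))` vanishes. -/
def homologyMappingConeSMulEquiv {C : Type*} [Category* C] [Preadditive C] [Linear A C]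
    [HasBinaryBiproducts C] (G : CochainComplex C ℤ ⥤ CochainComplex (ModuleCat.{v} A) ℤ)
    [G.PreservesZeroMorphisms] [G.Linear A] [PreservesConeSequences G]
    (K : CochainComplex C ℤ) (x : A) (n : ℤ) (h : IsZero ((G.obj K).homology (n + 1))) :
    (G.obj (mappingCone (x • 𝟙 K))).homology n ≃ₗ[A] QuotSMulTop x ((G.obj K).homology n) :=
  have map_smul_id : homologyMap (G.map (x • 𝟙 K)) n = x • 𝟙 _ := by
    rw [G.map_smul, CategoryTheory.Functor.map_id, homologyMap_smul, homologyMap_id]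
  have zero : (x • 𝟙 _) ≫ homologyMap (G.map (mappingCone.inr (x • 𝟙 K))) n = 0 := by
    rw [← map_smul_id, PreservesConeSequences.homologyMap_comp_homologyMap_inr]
  have exactness : (ShortComplex.mk _ _ zero).Exact := by
    simpa only [map_smul_id] using PreservesConeSequences.exact_homologyMap_inr G (x • 𝟙 K) n
  have := PreservesConeSequences.epi_homologyMap_inr G (x • 𝟙 K) n h
  quotSMulTopEquivOfExact exactness

end Homology

instance {k C : Type*} [Category* C] [MonoidalCategory C] [Preadditive C] [MonoidalPreadditive C]
    [Semiring k] [Linear k C] [MonoidalLinear k C] : (curriedTensor C).Linear k where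
  map_smul f r := by
    ext Z
    exact MonoidalLinear.smul_whiskerRight r f Z

section Koszul

variable {R} (Y : CochainComplex (ModuleCat R) ℤ)

instance : (tensorRight Y).Additive :=
  inferInstanceAs ((curriedTensor (ModuleCat R)).map₂CochainComplex.flip.obj Y).Additive

instance : (tensorRight Y).Linear R :=
  inferInstanceAs (((curriedTensor (ModuleCat R)).map₂CochainComplex.flip.obj Y).Linear R)

instance : PreservesConeSequences (tensorRight Y) :=
  inferInstanceAs
    (PreservesConeSequences ((curriedTensor (ModuleCat R)).map₂CochainComplex.flip.obj Y))

/-- The one-element case `Hⁿ(K(x) ⊗ Y) ≃ Hⁿ(Y) / x Hⁿ(Y)`, if `Hⁿ⁺¹(Y)` vanishes. -/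
def homologyKoszulOneTensorEquiv (x : R) (n : ℤ) (h : IsZero (Y.homology (n + 1))) :
    (koszulOne R x ⊗ Y).homology n ≃ₗ[R] QuotSMulTop x (Y.homology n) :=
  (homologyMappingConeSMulEquiv (tensorRight Y) (𝟙_ _) x n
    (h.of_iso ((HomologicalComplex.homologyFunctor _ _ (n + 1)).mapIso (λ_ Y)))).trans
      (QuotSMulTop.congr x (homologyLinearEquiv (λ_ Y) n))

end Koszul

/-- Let `x₁, …, xₙ ∈ R` and let `Y` be a complex of `R`-modules with `H_i(Y) = 0` for all
`i < i₀`.  Then `H_i(K^R(x₁,…,xₙ) ⊗_R Y) = 0` for all `i < i₀`, and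
`H_{i₀}(K^R(x₁,…,xₙ) ⊗_R Y) ≅ H_{i₀}(Y)/(x₁,…,xₙ)H_{i₀}(Y)`.

As in the one-element case, we use cohomological (upper) indexing on `ℤ`; reindexing by
`i ↦ -i` turns the chain-complex statement into the one below, where the vanishing hypothesis
and conclusion are for degrees `i > i₀`. -/
theorem stmt_5 (xs : List R) (Y : CochainComplex (ModuleCat R) ℤ) (i₀ : ℤ)
    (hY : ∀ i : ℤ, i₀ < i → Subsingleton (Y.homology i)) :
    (∀ i : ℤ, i₀ < i → Subsingleton ((koszul R xs ⊗ Y).homology i)) ∧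
    Nonempty
      (((koszul R xs ⊗ Y).homology i₀ : ModuleCat R) ≃ₗ[R]
        ((Y.homology i₀ : ModuleCat R) ⧸
          (Ideal.span {y : R | y ∈ xs}) • (⊤ : Submodule R (Y.homology i₀)))) := by
  induction xs generalizing Y with
  | nil =>
    let unit (i : ℤ) : (koszul R [] ⊗ Y).homology i ≃ₗ[R] Y.homology i :=
      homologyLinearEquiv (λ_ Y) i
    refine ⟨fun i hi => ?_, ⟨(unit i₀).trans (Submodule.quotEquivOfEqBot _ (by simp)).symm⟩⟩
    have := hY i hi
    exact (unit i).subsingleton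
  | cons x xs ih =>
    let assoc (i : ℤ) : (koszul R (x :: xs) ⊗ Y).homology i ≃ₗ[R]
        (koszul R xs ⊗ koszulOne R x ⊗ Y).homology i :=
      homologyLinearEquiv (α_ (koszul R xs) (koszulOne R x) Y) i
    let one (i : ℤ) (hi : i₀ ≤ i) := homologyKoszulOneTensorEquiv Y x i
      (ModuleCat.isZero_iff_subsingleton.2 (hY (i + 1) (by lia)))
    obtain ⟨vanishing, ⟨e⟩⟩ := ih (koszulOne R x ⊗ Y) fun i hi => by
      have := hY i hi
      exact (one i hi.le).subsingleton
    refine ⟨fun i hi => ?_, ⟨assoc i₀ ≪≫ₗ e ≪≫ₗ Submodule.Quotient.equiv _ _ (one i₀ le_rfl) ?_ ≪≫ₗ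
      (Submodule.quotOfListConsSMulTopEquivQuotSMulTopInner _ x xs).symm⟩⟩
    · have := vanishing i hi
      exact (assoc i).subsingleton
    · rw [Submodule.map_smul'', Submodule.map_top, LinearEquiv.range]

end
end

section
/- Let φ : R → S be a flat ring homomorphism of commutative noetherian rings, and let M be an R-module. Then Ext^i_R(S, M) = 0 for all i > dim(R/Ann_R(M)). In particular, if M is finitely generated, Ext^i_R(S, M) = 0 for all i > dim_R(M). -/
open CategoryTheory

/-!
After base change along `R → A`, the theorem says that a flat module `F` over a noetherian ring `A`
of Krull dimension at most `n` has projective dimension at most `n`. Since syzygies of flat modules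
are flat, it is enough to show `Ext^{n + 1}(F, L) = 0` for flat `L`.

The completion of `L_p` at the maximal ideal of `A_p` is flat and cotorsion: it is the limit of a
tower whose successive kernels are vector spaces over the residue field. Hence so is the product `C`
of these completions over all primes `p`. The map `L → C` is pure, so `C / L` is again flat. If
`p L = L` for all primes `p` of coheight less than `k`, then `p (C / L) = C / L` for all primes `p`
of coheight less than `k + 1`. Replacing `L` by `C / L` shifts the degree of `Ext` down by one and
increases `k` by one, and once `k` exceeds the Krull dimension, `p L = L` for all primes `p`, which
forces `L = 0`.
-/

namespace FlatCotorsion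

open TensorProduct Function

section Ideal

variable {B L : Type*} [CommRing B] [AddCommGroup L] [Module B L]

theorem mem_span_range_smul_top_iff {ι : Type*} [Fintype ι] (f : ι → B) (x : L) :
    x ∈ Ideal.span (Set.range f) • (⊤ : Submodule B L) ↔ ∃ y : ι → L, ∑ i, f i • y i = x := by
  constructor
  · intro hx
    induction hx using Submodule.smul_induction_on' with
    | smul a ha n _ =>
      obtain ⟨c, rfl⟩ := Ideal.mem_span_range_iff_exists_fun.1 ha
      exact ⟨fun i => c i • n, by simp [Finset.sum_smul, smul_smul, mul_comm]⟩
    | add x _ y _ hx hy =>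
      obtain ⟨u, rfl⟩ := hx
      obtain ⟨w, rfl⟩ := hy
      exact ⟨u + w, by simp [Finset.sum_add_distrib]⟩
  · rintro ⟨y, rfl⟩
    exact Submodule.sum_mem _ fun i _ =>
      Submodule.smul_mem_smul (Ideal.subset_span ⟨i, rfl⟩) trivial

theorem mem_smul_top_pi_iff {X : Type*} {T : X → Type*} [∀ p, AddCommGroup (T p)]
    [∀ p, Module B (T p)] {J : Ideal B} (hJ : J.FG) {x : ∀ p, T p} :
    x ∈ J • (⊤ : Submodule B (∀ p, T p)) ↔ ∀ p, x p ∈ J • (⊤ : Submodule B (T p)) := by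
  obtain ⟨r, g, rfl⟩ := Submodule.fg_iff_exists_fin_generating_family.1 hJ
  simp only [Ideal.submodule_span_eq, mem_span_range_smul_top_iff]
  refine ⟨fun ⟨y, hy⟩ p => ⟨fun i => y i p, by simp [← hy]⟩, fun h => ?_⟩
  choose y hy using h
  exact ⟨fun i p => y p i, by ext p; simpa using hy p⟩

end Ideal

section Matrix

variable {B : Type*} [CommRing B] {ι κ μ : Type*} [Fintype ι]

/-- The linear map `L^ι → L^κ` given by a matrix over the base ring; `Matrix.mulVecLin` is the
case of the ring itself. -/
def matrixMap (b : Matrix κ ι B) (L : Type*) [AddCommGroup L] [Module B L] :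
    (ι → L) →ₗ[B] (κ → L) :=
  LinearMap.pi fun k => ∑ i, b k i • LinearMap.proj i

section

variable {L : Type*} [AddCommGroup L] [Module B L]

@[simp]
theorem matrixMap_apply (b : Matrix κ ι B) (v : ι → L) (k : κ) :
    matrixMap b L v k = ∑ i, b k i • v i := by
  simp [matrixMap]

theorem matrixMap_sum_smul {σ : Type*} [Fintype σ] (b : Matrix κ ι B) (ζ : σ → ι → B) (w : σ → L) :
    matrixMap b L (fun i => ∑ s, ζ s i • w s) = fun k => ∑ s, matrixMap b B (ζ s) k • w s := by
  ext k
  simp only [matrixMap_apply, Finset.smul_sum, Finset.sum_smul, smul_smul, smul_eq_mul]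
  exact Finset.sum_comm

/-- This is the exactness of `0 → N ⊗ L → B^ι ⊗ L → (∏ₖ B ⧸ J k) ⊗ L`, where `N ⊆ B^ι` is the
solution module over the ring. -/
theorem exists_eq_sum_smul_of_matrixMap_mem [Module.Flat B L] [Finite κ] (b : Matrix κ ι B)
    (J : κ → Ideal B) (v : ι → L)
    (hv : ∀ k, matrixMap b L v k ∈ J k • (⊤ : Submodule B L)) :
    ∃ (t : ℕ) (ζ : Fin t → ι → B) (w : Fin t → L),
      (∀ s k, matrixMap b B (ζ s) k ∈ J k) ∧ v = fun i => ∑ s, ζ s i • w s := by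
  classical
  have := Fintype.ofFinite κ
  let ψ : (ι → B) →ₗ[B] (∀ k, B ⧸ J k) :=
    LinearMap.pi fun k => (J k).mkQ ∘ₗ LinearMap.proj k ∘ₗ matrixMap b B
  have hψ : ψ.lTensor L (∑ i, v i ⊗ₜ Pi.single i 1) = 0 := by
    apply (TensorProduct.piRight B B L fun k => B ⧸ J k).injective
    ext k
    apply (tensorQuotEquivQuotSMul L (J k)).injective
    have := (Submodule.Quotient.mk_eq_zero _).2 (hv k)
    rw [matrixMap_apply, ← Submodule.mkQ_apply, map_sum] at this
    simpa [ψ, Pi.single_apply, ← Submodule.Quotient.mk_smul] using this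
  obtain ⟨y, hy⟩ := (Module.Flat.lTensor_exact L ψ.exact_subtype_ker_map _).1 hψ
  obtain ⟨t, w, ζ, rfl⟩ := TensorProduct.exists_sum_tmul_eq y
  refine ⟨t, fun s => ζ s, w, fun s k => ?_, ?_⟩
  · simpa [ψ, Ideal.Quotient.eq_zero_iff_mem, -matrixMap_apply] using congrFun (ζ s).2 k
  · have := congrArg (TensorProduct.piScalarRight B B L ι) hy
    ext i
    simpa [Pi.single_apply, Finset.sum_apply] using (congrFun this i).symm

theorem ker_matrixMap_le_range [Module.Flat B L] [Finite κ] [Fintype μ] {a : Matrix κ ι B}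
    {b : Matrix ι μ B} (h : LinearMap.ker (matrixMap a B) ≤ LinearMap.range (matrixMap b B)) :
    LinearMap.ker (matrixMap a L) ≤ LinearMap.range (matrixMap b L) := by
  intro v hv
  obtain ⟨t, ζ, w, hζ, rfl⟩ := exists_eq_sum_smul_of_matrixMap_mem a (fun _ => ⊥) v
    fun k => by simp [-matrixMap_apply, LinearMap.mem_ker.1 hv]
  choose c hc using fun s => h (LinearMap.mem_ker.2 (funext (hζ s)))
  exact ⟨fun j => ∑ s, c s j • w s, by rw [matrixMap_sum_smul]; simp only [hc]⟩

theorem mem_smul_top_of_forall_mul_mem [Module.Flat B L] {K J : Ideal B} {c : B}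
    (hK : ∀ a, c * a ∈ J → a ∈ K) {x : L} (hx : c • x ∈ J • (⊤ : Submodule B L)) :
    x ∈ K • (⊤ : Submodule B L) := by
  obtain ⟨t, ζ, w, hζ, h⟩ := exists_eq_sum_smul_of_matrixMap_mem (ι := Unit) (κ := Unit)
    (.of fun _ _ => c) (fun _ => J) (fun _ => x) (by simpa using hx)
  rw [congrFun h ()]
  exact Submodule.sum_mem _ fun s _ =>
    Submodule.smul_mem_smul (hK _ (by simpa using hζ s ())) trivial

theorem iInf_smul_top [Module.Flat B L] [Finite κ] (J : κ → Ideal B) :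
    (⨅ k, J k) • (⊤ : Submodule B L) = ⨅ k, J k • (⊤ : Submodule B L) := by
  refine le_antisymm (le_iInf fun k => Submodule.smul_mono_left (iInf_le J k)) fun x hx => ?_
  rw [Submodule.mem_iInf] at hx
  obtain ⟨t, ζ, w, hζ, h⟩ := exists_eq_sum_smul_of_matrixMap_mem (ι := Unit)
    (.of fun _ _ => 1) J (fun _ => x) (by simpa using hx)
  rw [congrFun h ()]
  exact Submodule.sum_mem _ fun s _ => Submodule.smul_mem_smul
    (Submodule.mem_iInf _ |>.2 fun k => by simpa using hζ s k) trivial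

end

theorem flat_of_forall_ker_matrixMap_le_range [IsNoetherianRing B] {L : Type*} [AddCommGroup L]
    [Module B L]
    (h : ∀ {l m : ℕ} (a : Matrix Unit (Fin l) B) (b : Matrix (Fin l) (Fin m) B),
      LinearMap.ker (matrixMap a B) ≤ LinearMap.range (matrixMap b B) →
      LinearMap.ker (matrixMap a L) ≤ LinearMap.range (matrixMap b L)) : Module.Flat B L := by
  refine Module.Flat.of_forall_isTrivialRelation fun {l f x} hx => ?_
  let a : Matrix Unit (Fin l) B := .of fun _ => f
  obtain ⟨m, b, hb⟩ := Submodule.fg_iff_exists_fin_generating_family.1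
    (IsNoetherian.noetherian (LinearMap.ker (matrixMap a B)))
  have hker : LinearMap.ker (matrixMap a B) ≤
      LinearMap.range (matrixMap (Matrix.of b).transpose B) := by
    intro ζ hζ
    rw [← hb] at hζ
    obtain ⟨c, rfl⟩ := (Submodule.mem_span_range_iff_exists_fun B).1 hζ
    exact ⟨c, by ext; simp [mul_comm]⟩
  have hxa : x ∈ LinearMap.ker (matrixMap a L) := by
    ext
    simpa [a] using hx
  obtain ⟨y, hy⟩ := h a (Matrix.of b).transpose hker hxa
  refine ⟨m, fun i j => b j i, y, fun i => by simp [← hy], fun j => ?_⟩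
  have hbj : b j ∈ LinearMap.ker (matrixMap a B) := hb ▸ Submodule.subset_span ⟨j, rfl⟩
  simpa [a] using congrFun (LinearMap.mem_ker.1 hbj) ()

theorem flat_pi [IsNoetherianRing B] {X : Type*} (T : X → Type*) [∀ p, AddCommGroup (T p)]
    [∀ p, Module B (T p)] [∀ p, Module.Flat B (T p)] : Module.Flat B (∀ p, T p) := by
  refine flat_of_forall_ker_matrixMap_le_range fun a b hab x hx => ?_
  have hxp : ∀ p, (fun i => x i p) ∈ LinearMap.ker (matrixMap a (T p)) := fun p => by
    ext k
    simpa using congrFun (congrFun hx k) p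
  choose y hy using fun p => ker_matrixMap_le_range hab (hxp p)
  refine ⟨fun j p => y p j, ?_⟩
  ext i p
  simpa using congrFun (hy p) i

end Matrix

section AdicCompletion

variable {B : Type*} [CommRing B]

/-- The Artin-Rees property of a submodule `N` with respect to `I`: the topology induced on `N` by
the `I`-adic topology of the ambient module is the `I`-adic topology of `N`. -/
def IsArtinRees {Y : Type*} [AddCommGroup Y] [Module B Y] (I : Ideal B) (N : Submodule B Y) :
    Prop :=
  ∃ c : ℕ, ∀ n, I ^ (n + c) • ⊤ ⊓ N ≤ I ^ n • N

theorem isArtinRees_of_isNoetherianRing [IsNoetherianRing B] {Y : Type*} [AddCommGroup Y]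
    [Module B Y] [Module.Finite B Y] (I : Ideal B) (N : Submodule B Y) : IsArtinRees I N := by
  obtain ⟨c, hc⟩ := Ideal.exists_pow_inf_eq_pow_smul I N
  refine ⟨c, fun n => ?_⟩
  rw [hc _ (Nat.le_add_left c n), Nat.add_sub_cancel]
  exact Submodule.smul_mono le_rfl inf_le_right

theorem isArtinRees_range_matrixMap [IsNoetherianRing B] {ι κ : Type*} [Fintype ι] [Finite κ]
    {L : Type*} [AddCommGroup L] [Module B L] [Module.Flat B L] (I : Ideal B) (b : Matrix κ ι B) :
    IsArtinRees I (LinearMap.range (matrixMap b L)) := by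
  obtain ⟨c, hc⟩ := isArtinRees_of_isNoetherianRing I (LinearMap.range (matrixMap b B))
  refine ⟨c, ?_⟩
  rintro n _ ⟨hv, v, rfl⟩
  obtain ⟨t, ζ, w, hζ, rfl⟩ := exists_eq_sum_smul_of_matrixMap_mem b (fun _ => I ^ (n + c)) v
    fun k => (mem_smul_top_pi_iff (IsNoetherian.noetherian _)).1 hv k
  have hmem : ∀ s, matrixMap b B (ζ s) ∈ (I ^ n • ⊤ : Submodule B (ι → B)).map (matrixMap b B) := by
    intro s
    rw [Submodule.map_smul'', Submodule.map_top]
    exact hc n ⟨(mem_smul_top_pi_iff (IsNoetherian.noetherian _)).2 fun k => by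
      simpa [-matrixMap_apply] using hζ s k, ζ s, rfl⟩
  choose u hu hu' using hmem
  rw [← Submodule.map_top, ← Submodule.map_smul'']
  refine ⟨fun i => ∑ s, u s i • w s, (mem_smul_top_pi_iff (IsNoetherian.noetherian _)).2
    fun i => Submodule.sum_mem _ fun s _ => Submodule.smul_mem_smul ?_ trivial, ?_⟩
  · simpa using (mem_smul_top_pi_iff (IsNoetherian.noetherian _)).1 (hu s) i
  · simp only [matrixMap_sum_smul, hu']

theorem exists_sub_mem_pow_smul_top {X Y Z : Type*} [AddCommGroup X] [Module B X]
    [AddCommGroup Y] [Module B Y] [AddCommGroup Z] [Module B Z] {I : Ideal B} {f : X →ₗ[B] Y}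
    {g : Y →ₗ[B] Z} (hfg : LinearMap.ker g ≤ LinearMap.range f) {n m : ℕ}
    (hg : (I ^ m • ⊤ : Submodule B Z) ⊓ LinearMap.range g ≤ I ^ n • LinearMap.range g) {y : Y}
    (hy : g y ∈ (I ^ m • ⊤ : Submodule B Z)) :
    ∃ x, y - f x ∈ (I ^ n • ⊤ : Submodule B Y) := by
  have hmem := hg ⟨hy, y, rfl⟩
  rw [← Submodule.map_top, ← Submodule.map_smul''] at hmem
  obtain ⟨u, hu, hgu⟩ := hmem
  obtain ⟨x, hx⟩ := hfg (show y - u ∈ LinearMap.ker g by simp [hgu])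
  exact ⟨x, by simpa [hx] using hu⟩

theorem ker_adicCompletion_map_le_range {X Y Z : Type*} [AddCommGroup X] [Module B X]
    [AddCommGroup Y] [Module B Y] [AddCommGroup Z] [Module B Z] {I : Ideal B} {f : X →ₗ[B] Y}
    {g : Y →ₗ[B] Z} (hfg : LinearMap.ker g ≤ LinearMap.range f)
    (hf : IsArtinRees I (LinearMap.range f)) (hg : IsArtinRees I (LinearMap.range g)) :
    LinearMap.ker (AdicCompletion.map I g) ≤ LinearMap.range (AdicCompletion.map I f) := by
  obtain ⟨c, hc⟩ := hg
  obtain ⟨c', hc'⟩ := hf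
  intro y hy
  obtain ⟨y, rfl⟩ := AdicCompletion.mk_surjective I Y y
  have happrox : ∀ n, ∃ x, y (n + c) - f x ∈ (I ^ n • ⊤ : Submodule B Y) := fun n =>
    exists_sub_mem_pow_smul_top hfg (hc n) <| by
      simpa using congrArg (fun z => z.val (n + c)) (LinearMap.mem_ker.1 hy)
  choose x hx using happrox
  have hxx : ∀ n, f (x (n + 1)) - f (x n) ∈ (I ^ n • ⊤ : Submodule B Y) := by
    intro n
    have h₁ := Submodule.pow_smul_top_le I Y (Nat.le_add_right n c)
      (SModEq.sub_mem.1 (y.2 (show n + c ≤ n + 1 + c by omega)))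
    have h₂ := Submodule.pow_smul_top_le I Y n.le_succ (hx (n + 1))
    convert sub_mem (sub_mem (hx n) h₂) h₁ using 1
    abel
  -- The images `f (x n)` form a Cauchy sequence for the adic topology of `range f` itself.
  let z : AdicCompletion.AdicCauchySequence I (LinearMap.range f) :=
    .mk I _ (fun n => f.rangeRestrict (x (n + c'))) fun n => by
      refine (SModEq.sub_mem.2 ?_).symm
      rw [Submodule.mem_smul_top_iff]
      have h := hxx (n + c')
      rw [show n + c' + 1 = n + 1 + c' by omega] at h
      exact hc' n ⟨h, sub_mem ⟨_, rfl⟩ ⟨_, rfl⟩⟩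
  obtain ⟨w, hw⟩ := AdicCompletion.map_surjective I f.surjective_rangeRestrict
    (AdicCompletion.mk I _ z)
  refine ⟨w, ?_⟩
  have hf : f = (LinearMap.range f).subtype ∘ₗ f.rangeRestrict := rfl
  rw [hf, ← AdicCompletion.map_comp_apply, hw]
  ext n
  have h₁ := Submodule.pow_smul_top_le I Y (Nat.le_add_right n c') (hx (n + c'))
  have h₂ := SModEq.sub_mem.1 (y.2 (show n ≤ n + c' + c by omega))
  refine (SModEq.sub_mem.2 (?_ : y n - f (x (n + c')) ∈ _)).symm
  convert add_mem h₁ h₂ using 1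
  abel

theorem matrixMap_adicCompletion_pi {ι κ : Type*} [Fintype ι] {L : Type*} [AddCommGroup L]
    [Module B L] (I : Ideal B) (a : Matrix κ ι B) (z : AdicCompletion I (ι → L)) :
    matrixMap a (AdicCompletion I L) (AdicCompletion.pi I (fun _ => L) z) =
      AdicCompletion.pi I (fun _ => L) (AdicCompletion.map I (matrixMap a L) z) := by
  obtain ⟨z, rfl⟩ := AdicCompletion.mk_surjective I _ z
  ext k n
  simp [AdicCompletion.val_sum, AdicCompletion.pi, AdicCompletion.val_smul]

theorem bijective_adicCompletion_pi {ι : Type*} [Finite ι] {L : Type*} [AddCommGroup L]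
    [Module B L] (I : Ideal B) : Bijective (AdicCompletion.pi I fun _ : ι => L) := by
  classical
  have := Fintype.ofFinite ι
  convert (AdicCompletion.piEquivOfFintype I fun _ : ι => L).bijective
  ext1 x
  exact (AdicCompletion.piEquivOfFintype_apply I _ x).symm

theorem flat_adicCompletion [IsNoetherianRing B] {L : Type*} [AddCommGroup L] [Module B L]
    [Module.Flat B L] (I : Ideal B) : Module.Flat B (AdicCompletion I L) := by
  refine flat_of_forall_ker_matrixMap_le_range fun a b hab x hx => ?_
  obtain ⟨y, rfl⟩ := (bijective_adicCompletion_pi I).2 x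
  rw [LinearMap.mem_ker, matrixMap_adicCompletion_pi] at hx
  have hy : AdicCompletion.map I (matrixMap a L) y = 0 :=
    (bijective_adicCompletion_pi I).1 (hx.trans (map_zero _).symm)
  obtain ⟨z, hz⟩ := ker_adicCompletion_map_le_range (ker_matrixMap_le_range (L := L) hab)
    (isArtinRees_range_matrixMap I b) (isArtinRees_range_matrixMap I a) hy
  exact ⟨AdicCompletion.pi I (fun _ => L) z, by rw [matrixMap_adicCompletion_pi, hz]⟩

end AdicCompletion

section Pure

variable {B : Type*} [CommRing B] {L : Type*} [AddCommGroup L] [Module B L]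

theorem mem_smul_top_of_isPrimary [IsNoetherianRing B] [Module.Flat B L] {Q : Ideal B}
    (hQ : Q.IsPrimary) {x : L} (hx : ∀ n, ∃ s ∉ Q.radical,
      s • x ∈ (Q ⊔ Q.radical ^ n) • (⊤ : Submodule B L)) :
    x ∈ Q • (⊤ : Submodule B L) := by
  obtain ⟨n, hn⟩ := Q.exists_radical_pow_le_of_fg (IsNoetherian.noetherian _)
  obtain ⟨s, hs, h⟩ := hx n
  rw [sup_eq_left.2 hn] at h
  refine mem_smul_top_of_forall_mul_mem (fun a ha => ?_) h
  exact ((Ideal.isPrimary_iff.1 hQ).2 (mul_comm s a ▸ ha)).resolve_right hs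

theorem mem_smul_top_of_forall_prime [IsNoetherianRing B] [Module.Flat B L] {J : Ideal B} {x : L}
    (hx : ∀ (p : PrimeSpectrum B) (n : ℕ), ∃ s ∉ p.asIdeal,
      s • x ∈ (J ⊔ p.asIdeal ^ n) • (⊤ : Submodule B L)) : x ∈ J • (⊤ : Submodule B L) := by
  obtain ⟨t, rfl, ht⟩ := Submodule.isLasker B B J
  simp only [Finset.inf_eq_iInf, iInf_subtype', id] at hx ⊢
  rw [iInf_smul_top, Submodule.mem_iInf]
  refine fun Q => mem_smul_top_of_isPrimary (ht Q.2) fun n => ?_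
  obtain ⟨s, hs, h⟩ := hx ⟨Ideal.radical Q.1, Ideal.isPrime_radical (ht Q.2)⟩ n
  exact ⟨s, hs, Submodule.smul_mono_left (sup_le_sup_right (iInf_le _ Q) _) h⟩

theorem flat_of_pure {C L' : Type*} [AddCommGroup C] [Module B C] [AddCommGroup L'] [Module B L']
    [Module.Flat B C] (ι : L →ₗ[B] C) (π : C →ₗ[B] L') (hπ : Surjective π) (hex : Exact ι π)
    (hpure : ∀ (J : Ideal B) (x : L), ι x ∈ J • (⊤ : Submodule B C) →
      x ∈ J • (⊤ : Submodule B L)) : Module.Flat B L' := by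
  refine Module.Flat.of_forall_isTrivialRelation fun {l f x} hx => ?_
  choose c hc using fun i => hπ (x i)
  obtain ⟨v, hv⟩ := (hex (∑ i, f i • c i)).1 (by simpa [hc] using hx)
  obtain ⟨y, rfl⟩ := (mem_span_range_smul_top_iff f v).1
    (hpure _ v ((mem_span_range_smul_top_iff f _).2 ⟨c, hv.symm⟩))
  obtain ⟨k, a, z, hz, ha⟩ := Module.Flat.isTrivialRelation_of_sum_smul_eq_zero
    (f := f) (x := fun i => c i - ι (y i)) (by simp [smul_sub, ← hv])
  refine ⟨k, a, fun j => π (z j), fun i => ?_, ha⟩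
  simpa [hc, hex.apply_apply_eq_zero] using congrArg π (hz i)

theorem flat_of_exact {K P F : Type*} [AddCommGroup K] [Module B K] [AddCommGroup P] [Module B P]
    [AddCommGroup F] [Module B F] [Module.Flat B P] [Module.Flat B F] (i : K →ₗ[B] P)
    (π : P →ₗ[B] F) (hi : Injective i) (hex : Exact i π) (hπ : Surjective π) :
    Module.Flat B K := by
  rw [Module.Flat.iff_rTensor_injective']
  intro I
  have hcomm : i.lTensor B ∘ₗ I.subtype.rTensor K = I.subtype.rTensor P ∘ₗ i.lTensor I := by
    ext; rfl
  refine Injective.of_comp (f := i.lTensor B) ?_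
  rw [← LinearMap.coe_comp, hcomm, LinearMap.coe_comp]
  exact (Module.Flat.rTensor_preserves_injective_linearMap _ Subtype.val_injective).comp
    (LinearMap.lTensor_injective_of_exact_of_flat π hπ i hi hex I)

end Pure

section Cotorsion

universe u v

/-- A module `T` is cotorsion if `Ext¹(F, T) = 0` for all flat `F`; the vanishing is phrased as
extension of maps along short exact sequences `0 → K → P → F → 0` with `P` projective. -/
def IsCotorsion (B : Type u) [CommRing B] (T : Type v) [AddCommGroup T] [Module B T] : Prop :=
  ∀ (K P F : Type u) [AddCommGroup K] [Module B K] [AddCommGroup P] [Module B P]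
    [AddCommGroup F] [Module B F] [Module.Projective B P] [Module.Flat B F]
    (i : K →ₗ[B] P) (π : P →ₗ[B] F), Injective i → Exact i π → Surjective π →
    ∀ f : K →ₗ[B] T, ∃ g : P →ₗ[B] T, g ∘ₗ i = f

theorem IsCotorsion.of_field (k : Type u) [Field k] (T : Type v) [AddCommGroup T] [Module k T] :
    IsCotorsion k T := by
  intro K P F _ _ _ _ _ _ _ _ i π hi _ _ f
  obtain ⟨j, hj⟩ := i.exists_leftInverse_of_injective (LinearMap.ker_eq_bot.2 hi)
  exact ⟨f ∘ₗ j, by rw [LinearMap.comp_assoc, hj, LinearMap.comp_id]⟩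

theorem IsCotorsion.restrictScalars (A : Type u) {B : Type u} {T : Type v} [CommRing A]
    [CommRing B] [Algebra A B] [AddCommGroup T] [Module A T] [Module B T] [IsScalarTower A B T]
    (hT : IsCotorsion B T) : IsCotorsion A T := by
  intro K P F _ _ _ _ _ _ _ _ i π hi hex hπ f
  obtain ⟨g, hg⟩ := hT (B ⊗[A] K) (B ⊗[A] P) (B ⊗[A] F) (i.baseChange B) (π.baseChange B)
    (LinearMap.lTensor_injective_of_exact_of_flat π hπ i hi hex B)
    (lTensor_exact B hex hπ) (LinearMap.lTensor_surjective B hπ) (f.liftBaseChange B)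
  refine ⟨g.restrictScalars A ∘ₗ TensorProduct.mk A B P 1, ?_⟩
  ext x
  simpa using LinearMap.congr_fun hg (1 ⊗ₜ x)

variable {B : Type u} [CommRing B]

theorem IsCotorsion.pi {X : Type*} (T : X → Type v) [∀ p, AddCommGroup (T p)]
    [∀ p, Module B (T p)] (hT : ∀ p, IsCotorsion B (T p)) : IsCotorsion B (∀ p, T p) := by
  intro K P F _ _ _ _ _ _ _ _ i π hi hex hπ f
  choose g hg using fun p => hT p K P F i π hi hex hπ (LinearMap.proj p ∘ₗ f)
  refine ⟨LinearMap.pi g, ?_⟩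
  ext x p
  exact LinearMap.congr_fun (hg p) x

theorem IsCotorsion.of_isTorsionBySet (m : Ideal B) [m.IsMaximal] (T : Type v) [AddCommGroup T]
    [Module B T] (hT : Module.IsTorsionBySet B T m) : IsCotorsion B T := by
  let := Ideal.Quotient.field m
  let : Module (B ⧸ m) T := hT.module
  have : IsScalarTower B (B ⧸ m) T := hT.isScalarTower
  exact (IsCotorsion.of_field (B ⧸ m) T).restrictScalars B

theorem IsCotorsion.exists_comp_eq_and_comp_eq {K P F : Type u} [AddCommGroup K] [Module B K]
    [AddCommGroup P] [Module B P] [AddCommGroup F] [Module B F] [Module.Projective B P]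
    [Module.Flat B F] {X Y : Type v} [AddCommGroup X] [Module B X] [AddCommGroup Y] [Module B Y]
    {τ : X →ₗ[B] Y} (hker : IsCotorsion B (LinearMap.ker τ)) (hτ : Surjective τ) {i : K →ₗ[B] P}
    {π : P →ₗ[B] F} (hi : Injective i) (hex : Exact i π) (hπ : Surjective π) {f : K →ₗ[B] X}
    {g : P →ₗ[B] Y} (hg : g ∘ₗ i = τ ∘ₗ f) :
    ∃ g' : P →ₗ[B] X, g' ∘ₗ i = f ∧ τ ∘ₗ g' = g := by
  obtain ⟨h, rfl⟩ := Module.projective_lifting_property τ g hτ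
  have hmem : ∀ x, (f - h ∘ₗ i) x ∈ LinearMap.ker τ := fun x => by
    simpa [sub_eq_zero] using (LinearMap.congr_fun hg x).symm
  obtain ⟨e, he⟩ := hker K P F i π hi hex hπ (LinearMap.codRestrict _ _ hmem)
  refine ⟨h + (LinearMap.ker τ).subtype ∘ₗ e, ?_, ?_⟩
  · ext x
    simp [← LinearMap.comp_apply e, he]
  · ext x
    simp

theorem isTorsionBySet_ker_transitionMap (I : Ideal B) (L : Type*) [AddCommGroup L] [Module B L]
    (n : ℕ) :
    Module.IsTorsionBySet B (LinearMap.ker (AdicCompletion.transitionMap I L n.le_succ)) I := by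
  rintro ⟨x, hx⟩ ⟨a, ha⟩
  obtain ⟨x, rfl⟩ := Submodule.Quotient.mk_surjective _ x
  have hx' : x ∈ I ^ n • (⊤ : Submodule B L) := (Submodule.Quotient.mk_eq_zero _).1 hx
  ext
  refine (Submodule.Quotient.mk_eq_zero _).2 ?_
  rw [pow_succ', Submodule.mul_smul]
  exact Submodule.smul_mem_smul ha hx'

theorem IsCotorsion.adicCompletion (m : Ideal B) [m.IsMaximal] (L : Type v) [AddCommGroup L]
    [Module B L] : IsCotorsion B (AdicCompletion m L) := by
  intro K P F _ _ _ _ _ _ _ _ i π hi hex hπ f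
  have hlift : ∀ (n : ℕ) (g : P →ₗ[B] L ⧸ (m ^ n • ⊤ : Submodule B L)),
      g ∘ₗ i = AdicCompletion.eval m L n ∘ₗ f →
      ∃ g' : P →ₗ[B] L ⧸ (m ^ (n + 1) • ⊤ : Submodule B L),
        g' ∘ₗ i = AdicCompletion.eval m L (n + 1) ∘ₗ f ∧
        AdicCompletion.transitionMap m L n.le_succ ∘ₗ g' = g := fun n g hg =>
    (IsCotorsion.of_isTorsionBySet m _
      (isTorsionBySet_ker_transitionMap m L n)).exists_comp_eq_and_comp_eq
      (Submodule.factor_surjective _) hi hex hπ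
      (by rw [hg, ← LinearMap.comp_assoc, AdicCompletion.transitionMap_comp_eval])
  choose! next hnext htrans using hlift
  let g : ∀ n : ℕ, P →ₗ[B] L ⧸ (m ^ n • ⊤ : Submodule B L) := fun n => Nat.rec 0 next n
  have hg : ∀ n, g n ∘ₗ i = AdicCompletion.eval m L n ∘ₗ f := by
    intro n
    induction n with
    | zero =>
      have : Subsingleton (L ⧸ (m ^ 0 • ⊤ : Submodule B L)) :=
        Submodule.Quotient.subsingleton_iff.2 (by simp)
      ext x
      exact Subsingleton.elim _ _
    | succ n ih => exact hnext n _ ih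
  have hcompat : ∀ {a b : ℕ} (hab : a ≤ b),
      AdicCompletion.transitionMap m L hab ∘ₗ g b = g a := by
    intro a b hab
    induction b, hab using Nat.le_induction with
    | base => ext x; simp
    | succ b hab ih =>
      rw [← ih, ← htrans b (g b) (hg b), ← LinearMap.comp_assoc]
      simp [g]
  refine ⟨AdicCompletion.lift m g hcompat, ?_⟩
  ext x n
  exact LinearMap.congr_fun (hg n) x

end Cotorsion

section LocalCompletion

variable {A : Type*} [CommRing A] (p : PrimeSpectrum A)

section

variable {T : Type*} [AddCommGroup T] [Module A T] [Module (Localization.AtPrime p.asIdeal) T]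
  [IsScalarTower A (Localization.AtPrime p.asIdeal) T]

theorem mem_maximalIdeal_pow_smul_top_iff (n : ℕ) (x : T) :
    x ∈ IsLocalRing.maximalIdeal (Localization.AtPrime p.asIdeal) ^ n •
      (⊤ : Submodule (Localization.AtPrime p.asIdeal) T) ↔
      x ∈ p.asIdeal ^ n • (⊤ : Submodule A T) := by
  rw [← Localization.AtPrime.map_eq_maximalIdeal, ← Ideal.map_pow,
    ← Submodule.restrictScalars_mem A, Ideal.smul_restrictScalars, Submodule.restrictScalars_top]

theorem bijective_smul_of_notMem {s : A} (hs : s ∉ p.asIdeal) :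
    Bijective fun t : T => s • t := by
  obtain ⟨u, hu : (u : Localization.AtPrime p.asIdeal) = algebraMap A _ s⟩ :=
    IsLocalization.map_units (Localization.AtPrime p.asIdeal) (⟨s, hs⟩ : p.asIdeal.primeCompl)
  simpa only [Units.smul_def, hu, algebraMap_smul] using MulAction.bijective (β := T) u

theorem mem_smul_top_of_smul_mem {s : A} (hs : s ∉ p.asIdeal) {J : Ideal A} {t : T}
    (h : s • t ∈ J • (⊤ : Submodule A T)) : t ∈ J • (⊤ : Submodule A T) := by
  let e := LinearEquiv.ofBijective (LinearMap.lsmul A T s) (bijective_smul_of_notMem p hs)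
  simpa using Submodule.smul_top_le_comap_smul_top J e.symm.toLinearMap
    (show e t ∈ J • (⊤ : Submodule A T) from h)

theorem smul_top_eq_top_of_not_le {q : Ideal A} (hq : ¬ q ≤ p.asIdeal) :
    q • (⊤ : Submodule A T) = ⊤ := by
  obtain ⟨a, ha, hap⟩ := SetLike.not_le_iff_exists.1 hq
  exact eq_top_iff.2 fun t _ =>
    mem_smul_top_of_smul_mem p hap (Submodule.smul_mem_smul ha trivial)

end

section Localization

variable {L : Type*} [AddCommGroup L] [Module A L]

theorem exists_smul_mem_of_mkLinearMap_mem {J : Ideal A} {x : L}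
    (hx : LocalizedModule.mkLinearMap p.asIdeal.primeCompl L x ∈
      J • (⊤ : Submodule A (LocalizedModule p.asIdeal.primeCompl L))) :
    ∃ s ∉ p.asIdeal, s • x ∈ J • (⊤ : Submodule A L) := by
  rw [← Submodule.localized₀_top p.asIdeal.primeCompl (LocalizedModule.mkLinearMap _ L),
    ← Submodule.localized₀_smul] at hx
  obtain ⟨l, hl, s, h⟩ := hx
  rw [IsLocalizedModule.mk'_eq_iff, Submonoid.smul_def, ← map_smul,
    IsLocalizedModule.eq_iff_exists p.asIdeal.primeCompl] at h
  obtain ⟨c, hc⟩ := h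
  refine ⟨c * s, (c * s).2, ?_⟩
  rw [mul_smul]
  exact hc ▸ Submodule.smul_mem _ (c : A) hl

theorem smul_top_localizedModule (hp : p.asIdeal • (⊤ : Submodule A L) = ⊤) :
    p.asIdeal • (⊤ : Submodule A (LocalizedModule p.asIdeal.primeCompl L)) = ⊤ := by
  rw [← Submodule.localized₀_top p.asIdeal.primeCompl (LocalizedModule.mkLinearMap _ L),
    ← Submodule.localized₀_smul, hp]

theorem exists_sub_mkLinearMap_mem
    (hp : ∀ s ∉ p.asIdeal, (p.asIdeal ⊔ Ideal.span {s}) • (⊤ : Submodule A L) = ⊤)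
    (z : LocalizedModule p.asIdeal.primeCompl L) :
    ∃ l, z - LocalizedModule.mkLinearMap p.asIdeal.primeCompl L l ∈
      p.asIdeal • (⊤ : Submodule A (LocalizedModule p.asIdeal.primeCompl L)) := by
  let μ := LocalizedModule.mkLinearMap p.asIdeal.primeCompl L
  obtain ⟨⟨l, s⟩, hl : s • z = μ l⟩ := IsLocalizedModule.surj p.asIdeal.primeCompl μ z
  have hmem : l ∈ (p.asIdeal ⊔ Ideal.span {(s : A)}) • (⊤ : Submodule A L) := by
    rw [hp s s.2]; trivial
  rw [Submodule.sup_smul, Submodule.ideal_span_singleton_smul, Submodule.mem_sup] at hmem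
  obtain ⟨l₁, h₁, _, ⟨l₂, -, rfl⟩, rfl⟩ := hmem
  refine ⟨l₂, mem_smul_top_of_smul_mem p s.2 ?_⟩
  have hs : (s : A) • (z - μ l₂) = μ l₁ := by
    rw [smul_sub, ← map_smul, sub_eq_iff_eq_add, ← map_add]
    exact hl
  rw [hs]
  exact Submodule.smul_top_le_comap_smul_top _ μ h₁

end Localization

theorem exists_mk_eq_val_of_mem_smul_top {B T : Type*} [CommRing B] [Algebra A B] [AddCommGroup T]
    [Module A T] [Module B T] [IsScalarTower A B T] {I : Ideal B} {J : Ideal A}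
    {t : AdicCompletion I T} (ht : t ∈ J • (⊤ : Submodule A (AdicCompletion I T))) (n : ℕ) :
    ∃ y ∈ J • (⊤ : Submodule A T), Submodule.Quotient.mk y = t.val n := by
  let π : T →ₗ[A] T ⧸ (I ^ n • ⊤ : Submodule B T) :=
    (I ^ n • ⊤ : Submodule B T).mkQ.restrictScalars A
  have hπ : Surjective π := Submodule.Quotient.mk_surjective (I ^ n • ⊤ : Submodule B T)
  have heval := Submodule.smul_top_le_comap_smul_top J
    ((AdicCompletion.eval I T n).restrictScalars A) ht
  rwa [Submodule.mem_comap, ← LinearMap.range_eq_top.2 hπ, ← Submodule.map_top,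
    ← Submodule.map_smul''] at heval

/-- The completion of the localization `L_p` with respect to the maximal ideal of `A_p`. -/
abbrev LocalCompletion (L : Type*) [AddCommGroup L] [Module A L] :=
  AdicCompletion (IsLocalRing.maximalIdeal (Localization.AtPrime p.asIdeal))
    (LocalizedModule p.asIdeal.primeCompl L)

/-- The canonical map from `L` to the completion of `L_p`. -/
noncomputable def toLocalCompletion (L : Type*) [AddCommGroup L] [Module A L] :
    L →ₗ[A] LocalCompletion p L :=
  (AdicCompletion.of (IsLocalRing.maximalIdeal (Localization.AtPrime p.asIdeal))
    (LocalizedModule p.asIdeal.primeCompl L)).restrictScalars A ∘ₗ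
    LocalizedModule.mkLinearMap p.asIdeal.primeCompl L

instance flat_localCompletion (L : Type*) [AddCommGroup L] [Module A L] [IsNoetherianRing A]
    [Module.Flat A L] : Module.Flat A (LocalCompletion p L) := by
  have : IsNoetherianRing (Localization.AtPrime p.asIdeal) :=
    IsLocalization.isNoetherianRing p.asIdeal.primeCompl _ inferInstance
  have : Module.Flat (Localization.AtPrime p.asIdeal) (LocalCompletion p L) :=
    flat_adicCompletion _
  exact Module.Flat.trans A (Localization.AtPrime p.asIdeal) _

theorem isCotorsion_localCompletion (L : Type*) [AddCommGroup L] [Module A L] :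
    IsCotorsion A (LocalCompletion p L) :=
  (IsCotorsion.adicCompletion (IsLocalRing.maximalIdeal (Localization.AtPrime p.asIdeal))
    (LocalizedModule p.asIdeal.primeCompl L)).restrictScalars A

variable {L : Type*} [AddCommGroup L] [Module A L]

theorem exists_smul_mem_of_toLocalCompletion_mem {J : Ideal A} {x : L}
    (hx : toLocalCompletion p L x ∈ J • (⊤ : Submodule A (LocalCompletion p L))) (n : ℕ) :
    ∃ s ∉ p.asIdeal, s • x ∈ (J ⊔ p.asIdeal ^ n) • (⊤ : Submodule A L) := by
  apply exists_smul_mem_of_mkLinearMap_mem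
  obtain ⟨y, hy, hyx⟩ := exists_mk_eq_val_of_mem_smul_top hx n
  have hsub := (mem_maximalIdeal_pow_smul_top_iff p n _).1 ((Submodule.Quotient.eq _).1 hyx.symm)
  rw [Submodule.sup_smul, ← add_sub_cancel y (LocalizedModule.mkLinearMap _ L x)]
  exact Submodule.add_mem_sup hy hsub

theorem subsingleton_localCompletion (hp : p.asIdeal • (⊤ : Submodule A L) = ⊤) :
    Subsingleton (LocalCompletion p L) := by
  refine ⟨fun x y => AdicCompletion.ext fun n => ?_⟩
  have htop : IsLocalRing.maximalIdeal (Localization.AtPrime p.asIdeal) ^ n •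
      (⊤ : Submodule (Localization.AtPrime p.asIdeal)
        (LocalizedModule p.asIdeal.primeCompl L)) = ⊤ := by
    refine eq_top_iff.2 fun z _ => (mem_maximalIdeal_pow_smul_top_iff p n z).2 ?_
    induction n with
    | zero => simp
    | succ n ih => rw [pow_succ, Submodule.mul_smul, smul_top_localizedModule p hp]; exact ih
  have := Submodule.Quotient.subsingleton_iff.2 htop
  exact Subsingleton.elim _ _

theorem exists_sub_toLocalCompletion_mem [IsNoetherianRing A]
    (hp : ∀ s ∉ p.asIdeal, (p.asIdeal ⊔ Ideal.span {s}) • (⊤ : Submodule A L) = ⊤)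
    (t : LocalCompletion p L) :
    ∃ l, t - toLocalCompletion p L l ∈ p.asIdeal • (⊤ : Submodule A (LocalCompletion p L)) := by
  have : IsNoetherianRing (Localization.AtPrime p.asIdeal) :=
    IsLocalization.isNoetherianRing p.asIdeal.primeCompl _ inferInstance
  obtain ⟨z, hz⟩ := Submodule.Quotient.mk_surjective _ (t.val 1)
  obtain ⟨l, hl⟩ := exists_sub_mkLinearMap_mem p hp z
  refine ⟨l, ?_⟩
  replace hl := (mem_maximalIdeal_pow_smul_top_iff p 1 _).2 (by rwa [pow_one])
  suffices h : t - toLocalCompletion p L l ∈ p.asIdeal ^ 1 • ⊤ by rwa [pow_one] at h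
  rw [← mem_maximalIdeal_pow_smul_top_iff,
    AdicCompletion.pow_smul_top_eq_ker_eval (IsNoetherian.noetherian _), LinearMap.mem_ker,
    map_sub, AdicCompletion.eval_apply, ← hz, sub_eq_zero]
  exact (Submodule.Quotient.eq _).2 hl

end LocalCompletion

section Coresolution

variable {A : Type*} [CommRing A]

theorem smul_top_eq_top_of_forall_minimalPrimes [IsNoetherianRing A] {L : Type*} [AddCommGroup L]
    [Module A L] {J : Ideal A} (hJ : ∀ p ∈ J.minimalPrimes, p • (⊤ : Submodule A L) = ⊤) :
    J • (⊤ : Submodule A L) = ⊤ := by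
  let H : Submonoid (Ideal A) :=
    { carrier := {I | I • (⊤ : Submodule A L) = ⊤}
      one_mem' := by simp
      mul_mem' := fun {I I'} (hI : I • ⊤ = ⊤) (hI' : I' • ⊤ = ⊤) => by
        change (I * I') • ⊤ = ⊤
        rw [Submodule.mul_smul, hI', hI] }
  have hfin := J.finite_minimalPrimes_of_isNoetherianRing A
  obtain ⟨n, hn⟩ := J.exists_radical_pow_le_of_fg (IsNoetherian.noetherian _)
  have hprod : ∏ p ∈ hfin.toFinset, p ≤ J.radical := by
    have hinf := hfin.toFinset.inf_id_eq_sInf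
    rw [hfin.coe_toFinset, J.sInf_minimalPrimes] at hinf
    exact (Ideal.prod_le_inf (f := id)).trans hinf.le
  have hmem : (∏ p ∈ hfin.toFinset, p) ^ n ∈ H :=
    H.pow_mem (H.prod_mem fun p hp => hJ p (hfin.mem_toFinset.1 hp)) n
  exact top_unique (hmem.symm.le.trans
    (Submodule.smul_mono_left ((Ideal.pow_right_mono hprod n).trans hn)))

/-- `p L = L` for every prime `p` of coheight less than `k`: the condition on the successive terms
of the coresolution by cotorsion modules. -/
def IsDivisibleBelow (A : Type*) [CommRing A] (k : ℕ) (L : Type*) [AddCommGroup L] [Module A L] :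
    Prop :=
  ∀ p : PrimeSpectrum A, Order.coheight p < k → p.asIdeal • (⊤ : Submodule A L) = ⊤

theorem IsDivisibleBelow.subsingleton [IsNoetherianRing A] {k : ℕ} {L : Type*} [AddCommGroup L]
    [Module A L] (hL : IsDivisibleBelow A k L) (hk : ringKrullDim A < k) : Subsingleton L := by
  have hbot : (⊥ : Ideal A) • (⊤ : Submodule A L) = ⊤ :=
    smul_top_eq_top_of_forall_minimalPrimes fun p hp => hL ⟨p, hp.1.1⟩ <| by
      exact_mod_cast (Order.coheight_le_krullDim _).trans_lt hk
  rw [Submodule.bot_smul] at hbot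
  exact (Submodule.subsingleton_iff A).1 (subsingleton_of_bot_eq_top hbot)

/-- The canonical map from `L` to the product over all primes `p` of the completions of `L_p`. -/
noncomputable def toProdLocalCompletion (A L : Type*) [CommRing A] [AddCommGroup L]
    [Module A L] : L →ₗ[A] ∀ p : PrimeSpectrum A, LocalCompletion p L :=
  LinearMap.pi fun p => toLocalCompletion p L

variable [IsNoetherianRing A] {L : Type*} [AddCommGroup L] [Module A L]

theorem mem_smul_top_of_toProdLocalCompletion_mem [Module.Flat A L] {J : Ideal A} {x : L}
    (hx : toProdLocalCompletion A L x ∈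
      J • (⊤ : Submodule A (∀ p : PrimeSpectrum A, LocalCompletion p L))) :
    x ∈ J • (⊤ : Submodule A L) :=
  mem_smul_top_of_forall_prime fun p n => exists_smul_mem_of_toLocalCompletion_mem p
    ((mem_smul_top_pi_iff (IsNoetherian.noetherian J)).1 hx p) n

theorem toProdLocalCompletion_injective [Module.Flat A L] :
    Injective (toProdLocalCompletion A L) := by
  refine (injective_iff_map_eq_zero _).2 fun x hx => ?_
  simpa using mem_smul_top_of_toProdLocalCompletion_mem (J := ⊥) (x := x)
    (hx ▸ Submodule.zero_mem _)

instance flat_quotient_range_toProdLocalCompletion [Module.Flat A L] : Module.Flat A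
    ((∀ p : PrimeSpectrum A, LocalCompletion p L) ⧸ LinearMap.range (toProdLocalCompletion A L)) :=
  have := flat_pi (B := A) fun p : PrimeSpectrum A => LocalCompletion p L
  flat_of_pure (toProdLocalCompletion A L) _ (Submodule.mkQ_surjective _)
    (LinearMap.exact_map_mkQ_range _) fun _ _ => mem_smul_top_of_toProdLocalCompletion_mem

theorem exists_sub_toProdLocalCompletion_mem {q : PrimeSpectrum A}
    (hq : ∀ p : PrimeSpectrum A, q < p → p.asIdeal • (⊤ : Submodule A L) = ⊤)
    (c : ∀ p : PrimeSpectrum A, LocalCompletion p L) :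
    ∃ l, c - toProdLocalCompletion A L l ∈
      q.asIdeal • (⊤ : Submodule A (∀ p : PrimeSpectrum A, LocalCompletion p L)) := by
  have hs : ∀ s ∉ q.asIdeal, (q.asIdeal ⊔ Ideal.span {s}) • (⊤ : Submodule A L) = ⊤ :=
    fun s hs => smul_top_eq_top_of_forall_minimalPrimes fun p hp =>
      hq ⟨p, hp.1.1⟩ <| lt_of_le_of_ne (le_sup_left.trans hp.1.2) fun h => hs <| h ▸
        hp.1.2 (Submodule.mem_sup_right (Ideal.mem_span_singleton_self s))
  obtain ⟨l, hl⟩ := exists_sub_toLocalCompletion_mem q hs (c q)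
  refine ⟨l, (mem_smul_top_pi_iff (IsNoetherian.noetherian _)).2 fun p => ?_⟩
  by_cases hqp : q ≤ p
  · obtain rfl | hlt := hqp.eq_or_lt
    · exact hl
    · have := subsingleton_localCompletion p (hq p hlt)
      rw [Subsingleton.elim ((c - toProdLocalCompletion A L l) p) 0]
      exact zero_mem _
  · rw [smul_top_eq_top_of_not_le p hqp]
    trivial

theorem IsDivisibleBelow.quotient_range_toProdLocalCompletion {k : ℕ}
    (hL : IsDivisibleBelow A k L) : IsDivisibleBelow A (k + 1)
      ((∀ p : PrimeSpectrum A, LocalCompletion p L) ⧸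
        LinearMap.range (toProdLocalCompletion A L)) := by
  intro q hq
  have hq' : Order.coheight q ≤ k :=
    (ENat.lt_add_one_iff (ENat.natCast_ne_top k)).1 (by exact_mod_cast hq)
  refine eq_top_iff.2 fun z _ => ?_
  obtain ⟨c, rfl⟩ := Submodule.mkQ_surjective _ z
  obtain ⟨l, hl⟩ := exists_sub_toProdLocalCompletion_mem
    (fun p hp => hL p (Order.coheight_le_coe_iff.1 hq' p hp)) c
  have hmk := Submodule.smul_top_le_comap_smul_top _
    (LinearMap.range (toProdLocalCompletion A L)).mkQ hl
  have hzero : (LinearMap.range (toProdLocalCompletion A L)).mkQ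
      (toProdLocalCompletion A L l) = 0 := (Submodule.Quotient.mk_eq_zero _).2 ⟨l, rfl⟩
  rwa [Submodule.mem_comap, map_sub, hzero, sub_zero] at hmk

end Coresolution

section Ext

universe w u

section DimensionShifting

variable {C : Type*} [Category* C] [Abelian C] [HasExt.{w} C] {S : ShortComplex C}

theorem subsingleton_ext_X₃_succ (hS : S.ShortExact) [Projective S.X₂] (Y : C) (n : ℕ)
    [Subsingleton (Abelian.Ext.{w} S.X₁ Y n)] : Subsingleton (Abelian.Ext.{w} S.X₃ Y (n + 1)) := by
  refine subsingleton_of_forall_eq 0 fun x => ?_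
  obtain ⟨x₁, rfl⟩ := Abelian.Ext.contravariant_sequence_exact₃ hS Y x
    (Abelian.Ext.eq_zero_of_projective _) (add_comm 1 n)
  rw [Subsingleton.elim x₁ 0, Abelian.Ext.comp_zero]

theorem subsingleton_ext_one_iff (hS : S.ShortExact) [Projective S.X₂] (Y : C) :
    Subsingleton (Abelian.Ext.{w} S.X₃ Y 1) ↔ ∀ f : S.X₁ ⟶ Y, ∃ g : S.X₂ ⟶ Y, S.f ≫ g = f := by
  refine ⟨fun _ f => ?_, fun h => subsingleton_of_forall_eq 0 fun x => ?_⟩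
  · obtain ⟨x, hx⟩ := Abelian.Ext.contravariant_sequence_exact₁ hS Y (Abelian.Ext.mk₀ f)
      (add_zero 1) (Subsingleton.elim _ _)
    obtain ⟨g, rfl⟩ := (Abelian.Ext.mk₀_bijective _ _).2 x
    exact ⟨g, (Abelian.Ext.mk₀_bijective _ _).1 (by rw [← hx, Abelian.Ext.mk₀_comp_mk₀])⟩
  · obtain ⟨x₁, rfl⟩ := Abelian.Ext.contravariant_sequence_exact₃ hS Y x
      (Abelian.Ext.eq_zero_of_projective _) (add_zero 1)
    obtain ⟨f, rfl⟩ := (Abelian.Ext.mk₀_bijective _ _).2 x₁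
    obtain ⟨g, rfl⟩ := h f
    rw [← Abelian.Ext.mk₀_comp_mk₀, hS.extClass_comp_assoc]

theorem subsingleton_ext_succ_X₁ (hS : S.ShortExact) (X : C) (n : ℕ)
    [Subsingleton (Abelian.Ext.{w} X S.X₃ n)] [Subsingleton (Abelian.Ext.{w} X S.X₂ (n + 1))] :
    Subsingleton (Abelian.Ext.{w} X S.X₁ (n + 1)) := by
  refine subsingleton_of_forall_eq 0 fun x => ?_
  obtain ⟨x₃, rfl⟩ := Abelian.Ext.covariant_sequence_exact₁ X hS x (Subsingleton.elim _ _) rfl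
  rw [Subsingleton.elim x₃ 0, Abelian.Ext.zero_comp]

theorem subsingleton_ext_X₁ (hS : S.ShortExact) [Projective S.X₂] (Y : C) (n : ℕ)
    [Subsingleton (Abelian.Ext.{w} S.X₃ Y (n + 2))] :
    Subsingleton (Abelian.Ext.{w} S.X₁ Y (n + 1)) := by
  refine subsingleton_of_forall_eq 0 fun x => ?_
  obtain ⟨x₂, rfl⟩ := Abelian.Ext.contravariant_sequence_exact₁ hS Y x (add_comm 1 (n + 1))
    (Subsingleton.elim _ _)
  rw [Abelian.Ext.eq_zero_of_projective x₂, Abelian.Ext.comp_zero]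

end DimensionShifting

theorem flat_X₁_of_shortExact {R : Type u} [CommRing R] {S : ShortComplex (ModuleCat.{u} R)}
    (hS : S.ShortExact) [Module.Flat R S.X₂] [Module.Flat R S.X₃] : Module.Flat R S.X₁ :=
  flat_of_exact S.f.hom S.g.hom hS.moduleCat_injective_f
    ((ShortComplex.ShortExact.moduleCat_exact_iff_function_exact S).1 hS.exact)
    hS.moduleCat_surjective_g

section FlatModule

variable {A : Type u} [CommRing A]

instance flat_projectiveShortComplex_X₁ (F : ModuleCat.{u} A) [Module.Flat A F] :
    Module.Flat A F.projectiveShortComplex.X₁ :=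
  flat_X₁_of_shortExact F.shortExact_projectiveShortComplex

theorem subsingleton_ext_of_isCotorsion {T : Type u} [AddCommGroup T] [Module A T]
    (hT : IsCotorsion A T) (F : ModuleCat.{u} A) [Module.Flat A F] (n : ℕ) :
    Subsingleton (Abelian.Ext F (ModuleCat.of A T) (n + 1)) := by
  induction n generalizing F with
  | zero =>
    have hS := F.shortExact_projectiveShortComplex
    refine (subsingleton_ext_one_iff hS _).2 fun f => ?_
    obtain ⟨g, hg⟩ := hT _ _ F _ _ hS.moduleCat_injective_f
      ((ShortComplex.ShortExact.moduleCat_exact_iff_function_exact _).1 hS.exact)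
      hS.moduleCat_surjective_g f.hom
    exact ⟨ModuleCat.ofHom g, ModuleCat.hom_ext hg⟩
  | succ n ih =>
    have := ih F.projectiveShortComplex.X₁
    exact subsingleton_ext_X₃_succ F.shortExact_projectiveShortComplex _ _

theorem subsingleton_ext_of_isDivisibleBelow [IsNoetherianRing A] (F : ModuleCat.{u} A)
    [Module.Flat A F] (n : ℕ) {k : ℕ} {L : Type u} [AddCommGroup L] [Module A L] [Module.Flat A L]
    (hL : IsDivisibleBelow A k L) (hA : ringKrullDim A < (n + k : ℕ)) :
    Subsingleton (Abelian.Ext F (ModuleCat.of A L) n) := by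
  induction n generalizing k L with
  | zero =>
    have := hL.subsingleton (by simpa using hA)
    have : Subsingleton (F ⟶ ModuleCat.of A L) :=
      ⟨(ModuleCat.isZero_of_subsingleton (ModuleCat.of A L)).eq_of_tgt⟩
    exact Abelian.Ext.homEquiv₀.subsingleton
  | succ n ih =>
    let φ := toProdLocalCompletion A L
    let S := ModuleCat.shortComplexOfCompEqZero φ (LinearMap.range φ).mkQ
      (LinearMap.range_mkQ_comp φ)
    have hS : S.ShortExact := ModuleCat.shortComplex_shortExact S
      (LinearMap.exact_map_mkQ_range φ) toProdLocalCompletion_injective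
      (Submodule.mkQ_surjective _)
    have : Subsingleton (Abelian.Ext F S.X₃ n) :=
      ih hL.quotient_range_toProdLocalCompletion (by rwa [add_right_comm, add_assoc] at hA)
    have : Subsingleton (Abelian.Ext F S.X₂ (n + 1)) :=
      subsingleton_ext_of_isCotorsion (T := ∀ p : PrimeSpectrum A, LocalCompletion p L)
        (IsCotorsion.pi _ fun p => isCotorsion_localCompletion p L) F n
    exact subsingleton_ext_succ_X₁ hS F n

theorem hasProjectiveDimensionLE_of_forall_flat (n : ℕ) (F : ModuleCat.{u} A)
    [Module.Flat A F] (h : ∀ (L : ModuleCat.{u} A) [Module.Flat A L],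
      Subsingleton (Abelian.Ext F L (n + 1))) :
    HasProjectiveDimensionLE F n := by
  induction n generalizing F with
  | zero =>
    have hS := F.shortExact_projectiveShortComplex
    obtain ⟨r, hr⟩ := (subsingleton_ext_one_iff hS _).1 (h _) (𝟙 _)
    let s := ShortComplex.Splitting.ofExactOfRetraction _ hS.exact r hr hS.epi_g
    exact (projective_iff_hasProjectiveDimensionLE_zero F).1
      (Retract.projective (Y := F.projectiveShortComplex.X₂) ⟨s.s, _, s.s_g⟩)
  | succ n ih =>
    have hS := F.shortExact_projectiveShortComplex
    refine (hS.hasProjectiveDimensionLT_X₃_iff n inferInstance).2 (ih _ fun L _ => ?_)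
    have := h L
    exact subsingleton_ext_X₁ hS L n

theorem hasProjectiveDimensionLE_of_flat [IsNoetherianRing A] {n : ℕ}
    (hA : ringKrullDim A < (n + 1 : ℕ)) (F : ModuleCat.{u} A) [Module.Flat A F] :
    HasProjectiveDimensionLE F n :=
  hasProjectiveDimensionLE_of_forall_flat n F fun L _ =>
    subsingleton_ext_of_isDivisibleBelow F (n + 1) (k := 0) (L := L)
      (fun _ hp => absurd hp not_lt_zero) hA

end FlatModule

section BaseChange

variable {R A : Type u} [CommRing R] [CommRing A] [Algebra R A]

variable (A) in
/-- The short complex obtained from `S` by base change along `R → A`. -/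
noncomputable abbrev baseChangeShortComplex (S : ShortComplex (ModuleCat.{u} R)) :
    ShortComplex (ModuleCat.{u} A) :=
  ModuleCat.shortComplexOfCompEqZero (S.f.hom.baseChange A) (S.g.hom.baseChange A) <| by
    rw [← LinearMap.baseChange_comp, ← ModuleCat.hom_comp, S.zero, ModuleCat.hom_zero,
      LinearMap.baseChange_zero]

theorem shortExact_baseChangeShortComplex {S : ShortComplex (ModuleCat.{u} R)}
    (hS : S.ShortExact) [Module.Flat R S.X₃] : (baseChangeShortComplex A S).ShortExact := by
  have hex := (ShortComplex.ShortExact.moduleCat_exact_iff_function_exact S).1 hS.exact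
  exact ModuleCat.shortComplex_shortExact _
    (lTensor_exact A hex hS.moduleCat_surjective_g)
    (LinearMap.lTensor_injective_of_exact_of_flat _ hS.moduleCat_surjective_g _
      hS.moduleCat_injective_f hex A)
    (LinearMap.lTensor_surjective A hS.moduleCat_surjective_g)

instance projective_baseChangeShortComplex_X₂ (S : ShortComplex (ModuleCat.{u} R))
    [Module.Projective R S.X₂] : Projective (baseChangeShortComplex A S).X₂ :=
  (IsProjective.iff_projective _).1 (inferInstanceAs (Module.Projective A (A ⊗[R] S.X₂)))

theorem subsingleton_ext_of_hasProjectiveDimensionLE_baseChange (n : ℕ) (F : ModuleCat.{u} R)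
    [Module.Flat R F] [HasProjectiveDimensionLE (ModuleCat.of A (A ⊗[R] F)) n]
    (N : Type u) [AddCommGroup N] [Module R N] [Module A N] [IsScalarTower R A N] :
    Subsingleton (Abelian.Ext F (ModuleCat.of R N) (n + 1)) := by
  induction n generalizing F with
  | zero =>
    have hS := F.shortExact_projectiveShortComplex
    have hSA := shortExact_baseChangeShortComplex (A := A) hS
    have := HasProjectiveDimensionLT.subsingleton (ModuleCat.of A (A ⊗[R] F)) 1 1 le_rfl
      (ModuleCat.of A N)
    refine (subsingleton_ext_one_iff hS _).2 fun f => ?_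
    obtain ⟨g, hg⟩ := (subsingleton_ext_one_iff hSA (ModuleCat.of A N)).1 this
      (ModuleCat.ofHom (f.hom.liftBaseChange A))
    refine ⟨ModuleCat.ofHom (g.hom.restrictScalars R ∘ₗ TensorProduct.mk R A _ 1), ?_⟩
    ext x
    simpa using LinearMap.congr_fun (congrArg ModuleCat.Hom.hom hg) (1 ⊗ₜ x)
  | succ n ih =>
    have hS := F.shortExact_projectiveShortComplex
    have hSA := shortExact_baseChangeShortComplex (A := A) hS
    have := (hSA.hasProjectiveDimensionLT_X₃_iff n inferInstance).1 ‹_›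
    have := ih F.projectiveShortComplex.X₁
    exact subsingleton_ext_X₃_succ hS _ _

end BaseChange

section DerivedFunctor

variable {R C : Type*} [Ring R] [Category* C] [Abelian C] [Linear R C] [EnoughProjectives C]

theorem subsingleton_ext_of_subsingleton_abelianExt [HasExt.{w} C] (X Y : C) (n : ℕ)
    [Subsingleton (Abelian.Ext.{w} X Y (n + 1))] :
    Subsingleton (((Ext R C (n + 1)).obj (Opposite.op X)).obj Y) := by
  let P := projectiveResolution X
  refine ModuleCat.subsingleton_of_isZero (.of_iso ?_ (P.isoExt (n + 1) Y))
  rw [← HomologicalComplex.exactAt_iff_isZero_homology,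
    HomologicalComplex.exactAt_iff' _ n (n + 1) (n + 2) (by simp) (by simp),
    ShortComplex.moduleCat_exact_iff]
  intro (f : P.complex.X (n + 1) ⟶ Y) (hf : P.complex.d (n + 2) (n + 1) ≫ f = 0)
  exact (P.extMk_eq_zero_iff f (n + 2) rfl hf n rfl).1 (Subsingleton.elim _ _)

theorem subsingleton_ext_of_isZero (X : C) {Y : C} (hY : Limits.IsZero Y) (n : ℕ) :
    Subsingleton (((Ext R C n).obj (Opposite.op X)).obj Y) := by
  refine ModuleCat.subsingleton_of_isZero (.of_iso ?_ ((projectiveResolution X).isoExt n Y))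
  rw [← HomologicalComplex.exactAt_iff_isZero_homology, HomologicalComplex.exactAt_iff]
  refine ShortComplex.exact_of_isZero_X₂ _ ?_
  rw [Limits.IsZero.iff_id_eq_zero]
  ext (x : _ ⟶ _)
  exact hY.eq_of_tgt _ _

end DerivedFunctor

end Ext

end FlatCotorsion

universe u

open TensorProduct in
theorem stmt_6_general (R A F M : Type u) [CommRing R] [CommRing A] [IsNoetherianRing A]
    [Algebra R A] [AddCommGroup F] [Module R F] [Module.Flat R F] [AddCommGroup M] [Module R M]
    [Module A M] [IsScalarTower R A M] (i : ℕ)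
    (hi : ringKrullDim A < ((i : ℕ∞) : WithBot ℕ∞)) :
    Subsingleton
      (((Ext R (ModuleCat.{u} R) i).obj (Opposite.op (ModuleCat.of R F))).obj
        (ModuleCat.of R M)) := by
  cases i with
  | zero =>
    have : Subsingleton A := by
      by_contra h
      have := not_subsingleton_iff_nontrivial.1 h
      exact hi.not_ge ringKrullDim_nonneg_of_nontrivial
    have : Subsingleton M := Module.subsingleton A M
    exact FlatCotorsion.subsingleton_ext_of_isZero _ (ModuleCat.isZero_of_subsingleton _) 0
  | succ n =>
    have := FlatCotorsion.hasProjectiveDimensionLE_of_flat hi (.of A (A ⊗[R] F))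
    have := FlatCotorsion.subsingleton_ext_of_hasProjectiveDimensionLE_baseChange (A := A) n
      (.of R F) M
    exact FlatCotorsion.subsingleton_ext_of_subsingleton_abelianExt _ _ n

/-- Let `φ : R → S` be a flat ring homomorphism of commutative noetherian rings and `M` an
`R`-module.  Then `Ext^i_R(S, M) = 0` for all `i > dim (R / Ann_R M)`.  (For `M` finitely
generated, `dim_R M = dim (R / Ann_R M)`, so this says `Ext^i_R(S, M) = 0` for `i > dim_R M`.) -/
theorem stmt_6 (R S M : Type) [CommRing R] [CommRing S] [IsNoetherianRing R] [IsNoetherianRing S]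
    [Algebra R S] [Module.Flat R S] [AddCommGroup M] [Module R M] (i : ℕ)
    (hi : ringKrullDim (R ⧸ Module.annihilator R M) < ((i : ℕ∞) : WithBot ℕ∞)) :
    Subsingleton
      (((Ext R (ModuleCat R) i).obj (Opposite.op (ModuleCat.of R S))).obj (ModuleCat.of R M)) :=
  let _ : Module (R ⧸ Module.annihilator R M) M := Module.quotientAnnihilator
  have := (Module.isTorsionBySet_annihilator R M).isScalarTower (S := R)
  stmt_6_general R (R ⧸ Module.annihilator R M) S M i hi
end

section
/- Let (R, m) be a commutative noetherian local ring with m-adic completion R̂. Then Ext^i_R(R̂/R, R̂) = 0 for all i ≥ 0, Ext^i_R(R̂, R̂) = 0 for all i ≥ 1, and the evaluation map Hom_R(R̂, R̂) → R̂, f ↦ f(1), is an isomorphism. -/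
open CategoryTheory IsLocalRing

/-!
Let `R̂` be the `I`-adic completion, where `R ⧸ I` is semisimple. It is cotorsion: for a short exact
sequence `0 → K → F → Q → 0` with `F` projective and `Q` flat, a map `K → R̂` is extended to `F`
one quotient `R ⧸ Iⁿ` at a time. Lifting an extension along `R ⧸ Iⁿ⁺¹ → R ⧸ Iⁿ` leaves an error
with values in `Iⁿ ⧸ Iⁿ⁺¹`, a module over `R ⧸ I`, and this error extends to `F` because
`K ⧸ IK → F ⧸ IF` is a split injection. When `R̂` is flat, as it is for noetherian `R`, this gives
`Extⁱ(R̂, R̂) = 0` for `i ≥ 1`. By density of `R` in `R̂` the restriction `Hom(R̂, R̂) → Hom(R, R̂)`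
is bijective, and the long exact sequence of `0 → R → R̂ → R̂ ⧸ R → 0` gives `Extⁱ(R̂ ⧸ R, R̂) = 0`.
-/

universe u v

section FlatQuotient

variable {R K F Q : Type*} [CommRing R] [AddCommGroup K] [AddCommGroup F] [AddCommGroup Q]
  [Module R K] [Module R F] [Module R Q] {i : K →ₗ[R] F} {p : F →ₗ[R] Q}

lemma flat_left_of_exact [Module.Flat R F] [Module.Flat R Q] (hi : Function.Injective i)
    (hip : Function.Exact i p) (hp : Function.Surjective p) : Module.Flat R K := by
  rw [Module.Flat.iff_rTensor_injective']
  intro J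
  have hJK : Function.Injective (i.lTensor J) :=
    LinearMap.lTensor_injective_of_exact_of_flat p hp i hi hip J
  have hJF : Function.Injective (J.subtype.rTensor F) :=
    Module.Flat.rTensor_preserves_injective_linearMap _ J.subtype_injective
  have hcomm : i.lTensor R ∘ₗ J.subtype.rTensor K = J.subtype.rTensor F ∘ₗ i.lTensor J := by
    rw [LinearMap.lTensor_comp_rTensor, LinearMap.rTensor_comp_lTensor]
  have hcomp : Function.Injective (i.lTensor R ∘ₗ J.subtype.rTensor K) := by
    rw [hcomm]
    exact hJF.comp hJK
  rw [LinearMap.coe_comp] at hcomp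
  exact hcomp.of_comp

lemma exists_extend_of_isSemisimpleRing [Module.Flat R Q] (A : Type*) [CommRing A] [Algebra R A]
    [IsSemisimpleRing A] {V : Type*} [AddCommGroup V] [Module R V] [Module A V]
    [IsScalarTower R A V] (hi : Function.Injective i) (hip : Function.Exact i p)
    (hp : Function.Surjective p) (f : K →ₗ[R] V) : ∃ g : F →ₗ[R] V, g ∘ₗ i = f := by
  have hA : Function.Injective (i.baseChange A) :=
    LinearMap.lTensor_injective_of_exact_of_flat p hp i hi hip A
  obtain ⟨g, hg⟩ := IsSemisimpleModule.extension_property (i.baseChange A) hA (f.liftBaseChange A)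
  refine ⟨g.restrictScalars R ∘ₗ TensorProduct.mk R A F 1, LinearMap.ext fun x => ?_⟩
  simpa using DFunLike.congr_fun hg (1 ⊗ₜ x)

lemma exists_lift_extend_of_isTorsionBySet_ker [Module.Projective R F] [Module.Flat R Q]
    (I : Ideal R) [IsSemisimpleRing (R ⧸ I)] {V W : Type*} [AddCommGroup V] [AddCommGroup W]
    [Module R V] [Module R W] {π : V →ₗ[R] W} (hπ : Function.Surjective π)
    (hker : Module.IsTorsionBySet R (LinearMap.ker π) I) (hi : Function.Injective i)
    (hip : Function.Exact i p) (hp : Function.Surjective p) (f : K →ₗ[R] V) (g : F →ₗ[R] W)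
    (hfg : g ∘ₗ i = π ∘ₗ f) : ∃ g' : F →ₗ[R] V, π ∘ₗ g' = g ∧ g' ∘ₗ i = f := by
  obtain ⟨h, hh⟩ := Module.projective_lifting_property π g hπ
  have herr : ∀ x, (f - h ∘ₗ i) x ∈ LinearMap.ker π := fun x => by
    rw [LinearMap.mem_ker, ← LinearMap.comp_apply, LinearMap.comp_sub, ← LinearMap.comp_assoc, hh,
      hfg, sub_self, LinearMap.zero_apply]
  let _ : Module (R ⧸ I) (LinearMap.ker π) := hker.module
  obtain ⟨e, he⟩ := exists_extend_of_isSemisimpleRing (R ⧸ I) hi hip hp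
    ((f - h ∘ₗ i).codRestrict (LinearMap.ker π) herr)
  refine ⟨h + (LinearMap.ker π).subtype ∘ₗ e, ?_, ?_⟩
  · rw [LinearMap.comp_add, hh, ← LinearMap.comp_assoc, LinearMap.comp_ker_subtype,
      LinearMap.zero_comp, add_zero]
  · rw [LinearMap.add_comp, LinearMap.comp_assoc, he, LinearMap.subtype_comp_codRestrict,
      add_sub_cancel]

end FlatQuotient

section Extend

open AdicCompletion

variable {R : Type*} [CommRing R] (I : Ideal R) {N : Type*} [AddCommGroup N] [Module R N]

lemma isTorsionBySet_ker_transitionMap (n : ℕ) :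
    Module.IsTorsionBySet R (LinearMap.ker (transitionMap I N n.le_succ)) I := by
  rintro ⟨v, hv⟩ ⟨a, ha⟩
  obtain ⟨y, rfl⟩ := Submodule.mkQ_surjective _ v
  have hy : y ∈ I ^ n • (⊤ : Submodule R N) := (Submodule.Quotient.mk_eq_zero _).1 hv
  refine Subtype.ext ((Submodule.Quotient.mk_eq_zero _).2 ?_)
  rw [pow_succ', Submodule.mul_smul]
  exact Submodule.smul_mem_smul ha hy

lemma exists_extend_adicCompletion [IsSemisimpleRing (R ⧸ I)] {K F Q : Type*} [AddCommGroup K]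
    [AddCommGroup F] [AddCommGroup Q] [Module R K] [Module R F] [Module R Q] {i : K →ₗ[R] F}
    {p : F →ₗ[R] Q} [Module.Projective R F] [Module.Flat R Q] (hi : Function.Injective i)
    (hip : Function.Exact i p) (hp : Function.Surjective p) (f : K →ₗ[R] AdicCompletion I N) :
    ∃ g : F →ₗ[R] AdicCompletion I N, g ∘ₗ i = f := by
  have hstep (n : ℕ) (g : F →ₗ[R] N ⧸ (I ^ n • ⊤ : Submodule R N))
      (hg : g ∘ₗ i = eval I N n ∘ₗ f) :
      ∃ g' : F →ₗ[R] N ⧸ (I ^ (n + 1) • ⊤ : Submodule R N),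
        transitionMap I N n.le_succ ∘ₗ g' = g ∧ g' ∘ₗ i = eval I N (n + 1) ∘ₗ f :=
    exists_lift_extend_of_isTorsionBySet_ker I (Submodule.factor_surjective _)
      (isTorsionBySet_ker_transitionMap I n) hi hip hp _ g
      (by rw [hg, ← LinearMap.comp_assoc, transitionMap_comp_eval I N n.le_succ])
  choose lift hlift hextend using hstep
  have : Subsingleton (N ⧸ (I ^ 0 • ⊤ : Submodule R N)) :=
    Submodule.Quotient.subsingleton_iff.2 (by simp)
  let g : ∀ n, {g : F →ₗ[R] N ⧸ (I ^ n • ⊤ : Submodule R N) // g ∘ₗ i = eval I N n ∘ₗ f} :=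
    Nat.rec ⟨0, LinearMap.ext fun _ => Subsingleton.elim _ _⟩
      fun n g => ⟨lift n g.1 g.2, hextend n g.1 g.2⟩
  have hg {k n : ℕ} (hkn : k ≤ n) : transitionMap I N hkn ∘ₗ (g n).1 = (g k).1 :=
    IsAdicComplete.StrictMono.factorPow_comp_eq_of_factorPow_comp_succ_eq
      strictMono_id (fun n => (g n).1) (fun {n} => hlift n (g n).1 (g n).2) hkn
  refine ⟨AdicCompletion.lift I (fun n => (g n).1) hg, ?_⟩
  ext x n
  exact DFunLike.congr_fun (g n).2 x

end Extend

section Restriction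

open AdicCompletion

variable {R : Type*} [CommRing R] {I : Ideal R}

-- `M` is dense in its completion and linear maps are continuous for the `I`-adic topologies.
lemma adicCompletion_hom_ext {M N : Type*} [AddCommGroup M] [AddCommGroup N] [Module R M]
    [Module R N] [IsHausdorff I N] (hI : I.FG) {f g : AdicCompletion I M →ₗ[R] N}
    (hfg : f ∘ₗ of I M = g ∘ₗ of I M) : f = g := by
  refine LinearMap.ext fun x => (IsHausdorff.eq_iff_smodEq (I := I)).2 fun n => ?_
  obtain ⟨y, hy⟩ := Submodule.mkQ_surjective _ (eval I M n x)
  have hxy : x - of I M y ∈ I ^ n • (⊤ : Submodule R (AdicCompletion I M)) := by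
    rw [pow_smul_top_eq_ker_eval hI, LinearMap.mem_ker, map_sub, eval_of, hy, sub_self]
  have hfgy : f (of I M y) = g (of I M y) := DFunLike.congr_fun hfg y
  have hfgx : (f - g) (x - of I M y) = f x - g x := by
    rw [map_sub, LinearMap.sub_apply, LinearMap.sub_apply, hfgy, sub_self, sub_zero]
  rw [SModEq.sub_mem, ← hfgx]
  exact Submodule.smul_top_le_comap_smul_top _ (f - g) hxy

lemma bijective_comp_of_adicCompletion (hI : I.FG) :
    Function.Bijective fun f : AdicCompletion I R →ₗ[R] AdicCompletion I R => f ∘ₗ of I R :=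
  ⟨fun _ _ => adicCompletion_hom_ext hI, fun g =>
    ⟨LinearMap.mulRight R (g 1), LinearMap.ext_ring (one_mul _)⟩⟩

lemma bijective_apply_one_adicCompletion (hI : I.FG) :
    Function.Bijective fun f : AdicCompletion I R →ₗ[R] AdicCompletion I R => f 1 :=
  (LinearMap.ringLmapEquivSelf R R (AdicCompletion I R)).bijective.comp
    (bijective_comp_of_adicCompletion hI)

end Restriction

section Ext

variable {C : Type u} [Category.{v} C] [Abelian C] [HasExt.{v} C] {S : ShortComplex C} {Y : C}

lemma subsingleton_ext_zero_of_shortExact (hS : S.ShortExact)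
    (hY : Function.Injective fun f : S.X₂ ⟶ Y => S.f ≫ f) :
    Subsingleton (Abelian.Ext S.X₃ Y 0) := by
  have := hS.epi_g
  refine Abelian.Ext.homEquiv₀.subsingleton_congr.2
    ⟨fun f g => (cancel_epi S.g).1 (hY ?_)⟩
  simp only [S.zero_assoc, Limits.zero_comp]

lemma subsingleton_ext_one_of_shortExact (hS : S.ShortExact)
    (hY : Function.Surjective fun f : S.X₂ ⟶ Y => S.f ≫ f)
    [Subsingleton (Abelian.Ext S.X₂ Y 1)] : Subsingleton (Abelian.Ext S.X₃ Y 1) := by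
  refine subsingleton_of_forall_eq 0 fun x => ?_
  obtain ⟨y, rfl⟩ := Abelian.Ext.contravariant_sequence_exact₃ hS Y x (Subsingleton.elim _ _)
    (add_zero 1)
  obtain ⟨f, rfl⟩ := (Abelian.Ext.mk₀_bijective _ _).surjective y
  obtain ⟨g, rfl⟩ := hY f
  rw [← Abelian.Ext.mk₀_comp_mk₀, hS.extClass_comp_assoc]

lemma subsingleton_ext_succ_of_shortExact (hS : S.ShortExact) (n : ℕ)
    [Subsingleton (Abelian.Ext S.X₁ Y n)] [Subsingleton (Abelian.Ext S.X₂ Y (n + 1))] :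
    Subsingleton (Abelian.Ext S.X₃ Y (n + 1)) := by
  refine subsingleton_of_forall_eq 0 fun x => ?_
  obtain ⟨y, rfl⟩ := Abelian.Ext.contravariant_sequence_exact₃ hS Y x (Subsingleton.elim _ _)
    (add_comm 1 n)
  rw [Subsingleton.elim y 0, Abelian.Ext.comp_zero]

end Ext

section LeftDerivedExt

variable {R : Type*} [Ring R] {C : Type u} [Category.{v} C] [Abelian C] [HasExt.{v} C] [Linear R C]
  [EnoughProjectives C]

-- The left-derived functor `Ext` and the derived-category `Abelian.Ext` are both computed by a
-- projective resolution.
lemma subsingleton_ext_of_subsingleton_abelianExt (X Y : C) (n : ℕ)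
    [Subsingleton (Abelian.Ext X Y n)] :
    Subsingleton (((Ext R C n).obj (Opposite.op X)).obj Y) := by
  let P := projectiveResolution X
  refine ModuleCat.subsingleton_of_isZero (Limits.IsZero.of_iso ?_ (P.isoExt n Y))
  rw [← HomologicalComplex.exactAt_iff_isZero_homology]
  cases n with
  | zero =>
    rw [HomologicalComplex.exactAt_iff' _ 0 0 1 (by simp) (by simp),
      ShortComplex.moduleCat_exact_iff]
    intro (f : P.complex.X 0 ⟶ Y) (hf : P.complex.d 1 0 ≫ f = 0)
    have := Abelian.Ext.homEquiv₀ (X := X) (Y := Y).symm.subsingleton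
    have hdesc : P.exact₀.desc f hf = 0 := Subsingleton.elim (α := X ⟶ Y) _ _
    have hf₀ : f = 0 := by rw [← P.exact₀.g_desc f hf, hdesc, Limits.comp_zero]
    exact ⟨0, (map_zero _).trans hf₀.symm⟩
  | succ n =>
    rw [HomologicalComplex.exactAt_iff' _ n (n + 1) (n + 2) (by simp) (by simp),
      ShortComplex.moduleCat_exact_iff]
    intro (f : P.complex.X (n + 1) ⟶ Y) (hf : P.complex.d (n + 2) (n + 1) ≫ f = 0)
    exact (P.extMk_eq_zero_iff f (n + 2) rfl hf n rfl).1 (Subsingleton.elim _ _)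

end LeftDerivedExt

section Cotorsion

variable {R : Type u} [CommRing R]

/-- `N` is cotorsion, in the sense of Enochs, if `Ext¹(M, N) = 0` for every flat module `M`. The
modules `M` are taken in the universe of `N`. -/
def IsCotorsion [Small.{v} R] (N : ModuleCat.{v} R) : Prop :=
  ∀ (M : ModuleCat.{v} R) [Module.Flat R M], Subsingleton (Abelian.Ext M N 1)

lemma IsCotorsion.subsingleton_ext_succ [Small.{v} R] {N : ModuleCat.{v} R} (hN : IsCotorsion N)
    (M : ModuleCat.{v} R) [Module.Flat R M] (n : ℕ) : Subsingleton (Abelian.Ext M N (n + 1)) := by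
  induction n generalizing M with
  | zero => exact hN M
  | succ n ih =>
    let S := M.projectiveShortComplex
    have hS : S.ShortExact := M.shortExact_projectiveShortComplex
    have : Module.Flat R S.X₁ :=
      flat_left_of_exact (F := S.X₂) (Q := M) hS.moduleCat_injective_f
        ((ShortComplex.ShortExact.moduleCat_exact_iff_function_exact S).1 hS.exact)
        hS.moduleCat_surjective_g
    have := ih S.X₁
    have := Abelian.Ext.subsingleton_of_projective S.X₂ N (n + 1)
    exact subsingleton_ext_succ_of_shortExact hS (n + 1)

lemma isCotorsion_adicCompletion [Small.{v} R] (I : Ideal R) [IsSemisimpleRing (R ⧸ I)]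
    (N : Type v) [AddCommGroup N] [Module R N] :
    IsCotorsion (ModuleCat.of R (AdicCompletion I N)) := by
  intro M _
  let S := M.projectiveShortComplex
  have hS : S.ShortExact := M.shortExact_projectiveShortComplex
  have := Abelian.Ext.subsingleton_of_projective S.X₂ (ModuleCat.of R (AdicCompletion I N)) 0
  refine subsingleton_ext_one_of_shortExact hS fun f => ?_
  obtain ⟨g, hg⟩ := exists_extend_adicCompletion I (F := S.X₂) (Q := M) hS.moduleCat_injective_f
    ((ShortComplex.ShortExact.moduleCat_exact_iff_function_exact S).1 hS.exact)
    hS.moduleCat_surjective_g f.hom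
  exact ⟨ModuleCat.ofHom g, ModuleCat.hom_ext hg⟩

end Cotorsion

section Main

open AdicCompletion

variable {R : Type u} [CommRing R] (I : Ideal R)

lemma shortExact_adicCompletion (M : Type u) [AddCommGroup M] [Module R M] [IsHausdorff I M] :
    (ShortComplex.mk (ModuleCat.ofHom (of I M)) (ModuleCat.ofHom (LinearMap.range (of I M)).mkQ)
      (ModuleCat.hom_ext (LinearMap.range_mkQ_comp _))).ShortExact where
  exact := (ShortComplex.ShortExact.moduleCat_exact_iff_function_exact _).2
    (LinearMap.exact_map_mkQ_range _)
  mono_f := (ModuleCat.mono_iff_injective _).2 (AdicCompletion.of_injective I M)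
  epi_g := (ModuleCat.epi_iff_surjective _).2 (Submodule.mkQ_surjective _)

variable {I} [IsSemisimpleRing (R ⧸ I)] [IsHausdorff I R] [Module.Flat R (AdicCompletion I R)]

lemma subsingleton_ext_adicCompletion_quotient (hI : I.FG) (n : ℕ) :
    Subsingleton (Abelian.Ext (ModuleCat.of R (AdicCompletion I R ⧸ LinearMap.range (of I R)))
      (ModuleCat.of R (AdicCompletion I R)) n) := by
  have hS := shortExact_adicCompletion I R
  have hres := bijective_comp_of_adicCompletion hI
  have hcot := (isCotorsion_adicCompletion I R).subsingleton_ext_succ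
    (ModuleCat.of R (AdicCompletion I R))
  match n with
  | 0 =>
    exact subsingleton_ext_zero_of_shortExact hS fun f g hfg =>
      ModuleCat.hom_ext (hres.injective (congrArg ModuleCat.Hom.hom hfg))
  | 1 =>
    have := hcot 0
    refine subsingleton_ext_one_of_shortExact hS fun f => ?_
    obtain ⟨g, hg⟩ := hres.surjective f.hom
    exact ⟨ModuleCat.ofHom g, ModuleCat.hom_ext hg⟩
  | n + 2 =>
    have := hcot (n + 1)
    have := Abelian.Ext.subsingleton_of_projective (ModuleCat.of R R)
      (ModuleCat.of R (AdicCompletion I R)) n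
    exact subsingleton_ext_succ_of_shortExact hS (n + 1)

theorem stmt_12_general (hI : I.FG) :
    (∀ i : ℕ, Subsingleton
      (((Ext R (ModuleCat.{u} R) i).obj
          (Opposite.op (ModuleCat.of R (AdicCompletion I R ⧸ LinearMap.range (of I R))))).obj
        (ModuleCat.of R (AdicCompletion I R)))) ∧
    (∀ i : ℕ, 1 ≤ i → Subsingleton
      (((Ext R (ModuleCat.{u} R) i).obj
          (Opposite.op (ModuleCat.of R (AdicCompletion I R)))).obj
        (ModuleCat.of R (AdicCompletion I R)))) ∧
    Function.Bijective fun f : AdicCompletion I R →ₗ[R] AdicCompletion I R => f 1 := by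
  refine ⟨fun i => ?_, fun i hi => ?_, bijective_apply_one_adicCompletion hI⟩
  · have := subsingleton_ext_adicCompletion_quotient hI i
    exact subsingleton_ext_of_subsingleton_abelianExt _ _ i
  · obtain ⟨n, rfl⟩ := Nat.exists_eq_add_of_le' hi
    have := (isCotorsion_adicCompletion I R).subsingleton_ext_succ
      (ModuleCat.of R (AdicCompletion I R)) n
    exact subsingleton_ext_of_subsingleton_abelianExt _ _ (n + 1)

end Main

/-- Let `(R, m)` be a commutative noetherian local ring with `m`-adic completion `R̂`.  Then
`Ext^i_R(R̂/R, R̂) = 0` for all `i ≥ 0`, `Ext^i_R(R̂, R̂) = 0` for all `i ≥ 1`, and the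
evaluation map `Hom_R(R̂, R̂) → R̂`, `f ↦ f(1)`, is an isomorphism. -/
theorem stmt_12 (R : Type) [CommRing R] [IsNoetherianRing R] [IsLocalRing R] :
    (∀ i : ℕ, Subsingleton
      (((Ext R (ModuleCat R) i).obj
          (Opposite.op (ModuleCat.of R
            (AdicCompletion (maximalIdeal R) R ⧸
              LinearMap.range (AdicCompletion.of (maximalIdeal R) R))))).obj
        (ModuleCat.of R (AdicCompletion (maximalIdeal R) R)))) ∧
    (∀ i : ℕ, 1 ≤ i → Subsingleton
      (((Ext R (ModuleCat R) i).obj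
          (Opposite.op (ModuleCat.of R (AdicCompletion (maximalIdeal R) R)))).obj
        (ModuleCat.of R (AdicCompletion (maximalIdeal R) R)))) ∧
    Function.Bijective
      (fun f : AdicCompletion (maximalIdeal R) R →ₗ[R] AdicCompletion (maximalIdeal R) R =>
        f 1) := by
  have : IsSemisimpleRing (R ⧸ maximalIdeal R) :=
    inferInstanceAs (IsSemisimpleRing (ResidueField R))
  exact stmt_12_general (maximalIdeal R).fg_of_isNoetherianRing
end

section
/- Let φ : (R, m) → (S, mS) be a flat local homomorphism of commutative noetherian local rings inducing an isomorphism R/m → S/mS, and let M be a finitely generated R-module. If Ext^i_R(S, M) satisfies NAK for i = 1, …, dim_R(M), then Ext^i_R(S, M) = 0 for all i ≥ 1 and M admits an S-module structure compatible with its R-module structure via φ. -/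
open CategoryTheory IsLocalRing

/-- `M` admits an `S`-module structure whose restriction of scalars along the algebra map
`R → S` recovers the given `R`-module structure. -/
def HasCompatibleModuleStructure (R S M : Type) [CommRing R] [CommRing S] [Algebra R S]
    [AddCommGroup M] [Module R M] : Prop :=
  ∃ hmod : Module S M, ∀ (r : R) (m : M),
    @SMul.smul S M hmod.toDistribMulAction.toMulAction.toSMul (algebraMap R S r) m = r • m

/-!
Over a noetherian ring, `Ext^i(C, M)` vanishes when `C` is flat, `M` is finite and `i > dim M`.
Since flat modules have flat syzygies, base change along `R → A` and filtrations by cyclic modules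
reduce this, by induction on `i`, to `M = B` for a domain `B`. There `Ext^i(C, B)` is divisible for
every flat `C`, because `dim B/sB < dim B` for `s ≠ 0`, and this gives `Ext^(i+1)(C, B) = 0`:
after embedding `B` into injectives, one has to extend a homomorphism from a flat submodule of a
vector space over the fraction field to the whole space.

Over a local ring, let `i ≥ 1` be the largest degree with `Ext^i(C, M) ≠ 0`. A finite nonzero module
either contains the residue field, into which the positive `Ext` of flat modules vanish, or has a
regular element in `𝔪`; noetherian induction then gives `𝔪 Ext^i(C, M) = Ext^i(C, M)`, so NAK fails
in degree `i`. Hence under NAK all `Ext^i(S, M)` with `i ≥ 1` vanish. As `R/𝔪 → S/𝔪S` is bijective,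
the same induction shows that evaluation at `1` is a bijection `Hom(S, M) → M`, through which `M`
inherits the `S`-module structure of `Hom(S, M)`.
-/

universe w v u

section AbelianCategory

variable {C : Type u} [Category.{v} C] [Abelian C] [HasExt.{w} C] {T : ShortComplex C}

theorem subsingleton_ext_of_isZero {Y : C} (hY : Limits.IsZero Y) (X : C) (n : ℕ) :
    Subsingleton (Abelian.Ext X Y n) :=
  AddCommGrpCat.subsingleton_of_isZero ((Abelian.extFunctorObj X n).map_isZero hY)

theorem subsingleton_ext_congr_of_iso {Y Y' : C} (e : Y ≅ Y') (X : C) (n : ℕ) :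
    Subsingleton (Abelian.Ext X Y n) ↔ Subsingleton (Abelian.Ext X Y' n) :=
  ((Abelian.extFunctorObj X n).mapIso e).addCommGroupIsoToAddEquiv.subsingleton_congr

theorem subsingleton_ext_X₂ (hT : T.ShortExact) (X : C) (n : ℕ)
    (h₁ : Subsingleton (Abelian.Ext X T.X₁ n)) (h₃ : Subsingleton (Abelian.Ext X T.X₃ n)) :
    Subsingleton (Abelian.Ext X T.X₂ n) := by
  refine subsingleton_of_forall_eq 0 fun x ↦ ?_
  obtain ⟨y, rfl⟩ := Abelian.Ext.covariant_sequence_exact₂ X hT x (Subsingleton.elim _ _)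
  rw [Subsingleton.elim y 0, Abelian.Ext.zero_comp]

theorem subsingleton_ext_X₃ (hT : T.ShortExact) (X : C) (n : ℕ)
    (h₂ : Subsingleton (Abelian.Ext X T.X₂ n))
    (h₁ : Subsingleton (Abelian.Ext X T.X₁ (n + 1))) :
    Subsingleton (Abelian.Ext X T.X₃ n) := by
  refine subsingleton_of_forall_eq 0 fun x ↦ ?_
  obtain ⟨y, rfl⟩ := Abelian.Ext.covariant_sequence_exact₃ X hT x rfl (Subsingleton.elim _ _)
  rw [Subsingleton.elim y 0, Abelian.Ext.zero_comp]

theorem subsingleton_ext_X₁_of_injective (hT : T.ShortExact) [Injective T.X₂] (X : C) (n : ℕ)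
    (h₃ : Subsingleton (Abelian.Ext X T.X₃ n)) : Subsingleton (Abelian.Ext X T.X₁ (n + 1)) := by
  refine subsingleton_of_forall_eq 0 fun x ↦ ?_
  obtain ⟨y, rfl⟩ := Abelian.Ext.covariant_sequence_exact₁ X hT x
    (Abelian.Ext.eq_zero_of_injective _) rfl
  rw [Subsingleton.elim y 0, Abelian.Ext.zero_comp]

theorem exists_lift_of_subsingleton_ext_one (hT : T.ShortExact) {X : C}
    (h : Subsingleton (Abelian.Ext X T.X₁ 1)) (f : X ⟶ T.X₃) : ∃ g : X ⟶ T.X₂, g ≫ T.g = f := by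
  obtain ⟨y, hy⟩ := Abelian.Ext.covariant_sequence_exact₃ X hT (Abelian.Ext.mk₀ f) rfl
    (Subsingleton.elim _ _)
  obtain ⟨g, rfl⟩ := (Abelian.Ext.mk₀_bijective _ _).surjective y
  rw [Abelian.Ext.mk₀_comp_mk₀] at hy
  exact ⟨g, (Abelian.Ext.mk₀_bijective _ _).injective hy⟩

theorem subsingleton_ext_succ_succ_iff_of_projective (hT : T.ShortExact) [Projective T.X₂]
    (Y : C) (n : ℕ) :
    Subsingleton (Abelian.Ext T.X₃ Y (n + 2)) ↔ Subsingleton (Abelian.Ext T.X₁ Y (n + 1)) := by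
  refine ⟨fun h ↦ subsingleton_of_forall_eq 0 fun x ↦ ?_,
    fun h ↦ subsingleton_of_forall_eq 0 fun x ↦ ?_⟩
  · obtain ⟨y, rfl⟩ := Abelian.Ext.contravariant_sequence_exact₁ hT Y x (add_comm 1 (n + 1))
      (Subsingleton.elim _ _)
    rw [Abelian.Ext.eq_zero_of_projective y, Abelian.Ext.comp_zero]
  · obtain ⟨y, rfl⟩ := Abelian.Ext.contravariant_sequence_exact₃ hT Y x
      (Abelian.Ext.eq_zero_of_projective _) (add_comm 1 (n + 1))
    rw [Subsingleton.elim y 0, Abelian.Ext.comp_zero]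

theorem subsingleton_ext_one_iff_of_projective (hT : T.ShortExact) [Projective T.X₂] (Y : C) :
    Subsingleton (Abelian.Ext T.X₃ Y 1) ↔ ∀ f : T.X₁ ⟶ Y, ∃ g : T.X₂ ⟶ Y, T.f ≫ g = f := by
  refine ⟨fun h f ↦ ?_, fun h ↦ subsingleton_of_forall_eq 0 fun x ↦ ?_⟩
  · obtain ⟨y, hy⟩ := Abelian.Ext.contravariant_sequence_exact₁ hT Y (Abelian.Ext.mk₀ f)
      (add_comm 1 0) (Subsingleton.elim _ _)
    obtain ⟨g, rfl⟩ := (Abelian.Ext.mk₀_bijective _ _).surjective y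
    rw [Abelian.Ext.mk₀_comp_mk₀] at hy
    exact ⟨g, (Abelian.Ext.mk₀_bijective _ _).injective hy⟩
  · obtain ⟨y, rfl⟩ := Abelian.Ext.contravariant_sequence_exact₃ hT Y x
      (Abelian.Ext.eq_zero_of_projective _) (add_comm 1 0)
    obtain ⟨f, rfl⟩ := (Abelian.Ext.mk₀_bijective _ _).surjective y
    obtain ⟨g, rfl⟩ := h f
    rw [← Abelian.Ext.mk₀_comp_mk₀, ← Abelian.Ext.comp_assoc_of_third_deg_zero,
      hT.extClass_comp, Abelian.Ext.zero_comp]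

section Linear

variable {R : Type*} [CommRing R] [Linear R C] {X Y : C}

/-- The map sending an `(n + 1)`-cocycle of `Hom(P, Y)`, for `P` a projective resolution of `X`,
to its class in `Ext X Y (n + 1)`. The cocycles are those of the three-term piece of `Hom(P, Y)`
around degree `n + 1`, the form in which Mathlib computes the homology of a complex of modules. -/
noncomputable def extOfCocycle (P : ProjectiveResolution X) (Y : C) (n : ℕ) :
    LinearMap.ker ((P.complex.linearYonedaObj R Y).sc' n (n + 1) (n + 2)).g.hom →ₗ[R]
      Abelian.Ext X Y (n + 1) where
  toFun f := P.extMk (f.1 : P.complex.X (n + 1) ⟶ Y) (n + 2) rfl f.2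
  map_add' _ _ := (P.add_extMk _ _ _ _ _ _).symm
  map_smul' r f := by
    have h := P.extMk_comp_mk₀ (f.1 : P.complex.X (n + 1) ⟶ Y) (n + 2) rfl f.2 (r • 𝟙 Y)
    rw [← Abelian.Ext.smul_eq_comp_mk₀] at h
    rw [RingHom.id_apply, h]
    congr 1
    exact ((Linear.comp_smul _ _ _ _ _ _).trans (congrArg (r • ·) (Category.comp_id _))).symm

theorem extOfCocycle_surjective (P : ProjectiveResolution X) (Y : C) (n : ℕ) :
    Function.Surjective (extOfCocycle (R := R) P Y n) := fun α ↦ by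
  obtain ⟨f, hf, rfl⟩ := P.extMk_surjective α (n + 2) rfl
  exact ⟨⟨f, hf⟩, rfl⟩

theorem ker_extOfCocycle (P : ProjectiveResolution X) (Y : C) (n : ℕ) :
    LinearMap.ker (extOfCocycle (R := R) P Y n) = LinearMap.range
      ((P.complex.linearYonedaObj R Y).sc' n (n + 1) (n + 2)).moduleCatToCycles := by
  ext ⟨f, hf⟩
  rw [LinearMap.mem_ker, LinearMap.mem_range]
  refine (Iff.trans ?_ (P.extMk_eq_zero_iff f (n + 2) rfl hf n rfl).symm).symm
  exact exists_congr fun _ ↦ Subtype.ext_iff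

/-- In positive degrees, the modules `Ext R C n`, derived functors of `Hom`, agree with the
modules `Abelian.Ext`, morphisms in the derived category. -/
noncomputable def extLinearEquiv [EnoughProjectives C] (X Y : C) (n : ℕ) :
    ((Ext R C (n + 1)).obj (Opposite.op X)).obj Y ≃ₗ[R] Abelian.Ext X Y (n + 1) :=
  let P := projectiveResolution X
  let K := P.complex.linearYonedaObj R Y
  (P.isoExt (n + 1) Y ≪≫
      ShortComplex.homologyMapIso (K.isoSc' n (n + 1) (n + 2) (by simp) (by simp)) ≪≫
      (K.sc' n (n + 1) (n + 2)).moduleCatHomologyIso).toLinearEquiv ≪≫ₗ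
    Submodule.quotEquivOfEq _ _ (ker_extOfCocycle P Y n).symm ≪≫ₗ
    (extOfCocycle P Y n).quotKerEquivOfSurjective (extOfCocycle_surjective P Y n)

end Linear

end AbelianCategory

section FlatBaseChange

open TensorProduct

theorem flat_ker_of_surjective {R P C : Type*} [CommRing R] [AddCommGroup P] [AddCommGroup C]
    [Module R P] [Module R C] [Module.Flat R P] [Module.Flat R C] {p : P →ₗ[R] C}
    (hp : Function.Surjective p) : Module.Flat R (LinearMap.ker p) := by
  refine Module.Flat.iff_rTensor_injective'.mpr fun I ↦ ?_
  have hker : Function.Injective ((LinearMap.ker p).subtype.lTensor I) :=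
    LinearMap.lTensor_injective_of_exact_of_flat p hp _ (LinearMap.ker p).injective_subtype
      (LinearMap.exact_subtype_ker_map p) I
  have hI : Function.Injective (I.subtype.rTensor P) :=
    Module.Flat.rTensor_preserves_injective_linearMap _ I.injective_subtype
  refine Function.Injective.of_comp (f := (LinearMap.ker p).subtype.lTensor R) ?_
  rw [← LinearMap.coe_comp, LinearMap.lTensor_comp_rTensor, ← LinearMap.rTensor_comp_lTensor]
  exact hI.comp hker

theorem shortExact_baseChange {R : Type u} (A : Type u) [CommRing R] [CommRing A] [Algebra R A]
    {K P C : Type u} [AddCommGroup K] [AddCommGroup P] [AddCommGroup C] [Module R K] [Module R P]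
    [Module R C] [Module.Flat R C] {i : K →ₗ[R] P} {p : P →ₗ[R] C} (hi : Function.Injective i)
    (hip : Function.Exact i p) (hp : Function.Surjective p) :
    (ModuleCat.shortComplexOfCompEqZero (i.baseChange A) (p.baseChange A) (by
      rw [← LinearMap.baseChange_comp, hip.linearMap_comp_eq_zero,
        LinearMap.baseChange_zero])).ShortExact :=
  ModuleCat.shortComplex_shortExact _ (lTensor_exact A hip hp)
    (LinearMap.lTensor_injective_of_exact_of_flat p hp i hi hip A)
    (LinearMap.lTensor_surjective A hp)

variable {R : Type u} [CommRing R]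

theorem subsingleton_ext_of_baseChange {A : Type u} [CommRing A] [Algebra R A] (C N : Type u)
    [AddCommGroup C] [Module R C] [Module.Flat R C] [AddCommGroup N] [Module R N] [Module A N]
    [IsScalarTower R A N] (n : ℕ)
    (h : Subsingleton (Abelian.Ext (ModuleCat.of A (A ⊗[R] C)) (ModuleCat.of A N) n)) :
    Subsingleton (Abelian.Ext (ModuleCat.of R C) (ModuleCat.of R N) n) := by
  induction n generalizing C with
  | zero =>
    have : Subsingleton (ModuleCat.of A (A ⊗[R] C) ⟶ ModuleCat.of A N) :=
      Abelian.Ext.addEquiv₀.subsingleton_congr.mp h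
    refine Abelian.Ext.addEquiv₀.subsingleton_congr.mpr (subsingleton_of_forall_eq 0 fun f ↦ ?_)
    have hf : ModuleCat.ofHom (f.hom.liftBaseChange A) = 0 := Subsingleton.elim _ _
    ext c
    simpa using congr($(hf).hom (1 ⊗ₜ c))
  | succ n ih =>
    let p : (C →₀ R) →ₗ[R] C := Finsupp.linearCombination R id
    have hp : Function.Surjective p := Finsupp.linearCombination_id_surjective R C
    have : Module.Flat R (LinearMap.ker p) := flat_ker_of_surjective hp
    have hR : p.shortComplexKer.ShortExact := LinearMap.shortExact_shortComplexKer hp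
    have : Projective p.shortComplexKer.X₂ :=
      (IsProjective.iff_projective (C →₀ R)).mp inferInstance
    have hA := shortExact_baseChange A (K := LinearMap.ker p) (LinearMap.ker p).injective_subtype
      (LinearMap.exact_subtype_ker_map p) hp
    have : Projective (ModuleCat.of A (A ⊗[R] (C →₀ R))) :=
      (IsProjective.iff_projective (A ⊗[R] (C →₀ R))).mp inferInstance
    cases n with
    | zero =>
      refine (subsingleton_ext_one_iff_of_projective hR _).mpr fun f ↦ ?_
      obtain ⟨g, hg⟩ := (subsingleton_ext_one_iff_of_projective hA _).mp h
        (ModuleCat.ofHom (f.hom.liftBaseChange A))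
      refine ⟨ModuleCat.ofHom (g.hom.restrictScalars R ∘ₗ TensorProduct.mk R A (C →₀ R) 1), ?_⟩
      ext c
      simpa using congr($(hg).hom (1 ⊗ₜ c))
    | succ n =>
      exact (subsingleton_ext_succ_succ_iff_of_projective hR _ n).mpr
        (ih (LinearMap.ker p) ((subsingleton_ext_succ_succ_iff_of_projective hA _ n).mp h))

theorem subsingleton_ext_succ_of_field (k : Type u) [Field k] [Algebra R k] (C N : Type u)
    [AddCommGroup C] [Module R C] [Module.Flat R C] [AddCommGroup N] [Module R N] [Module k N]
    [IsScalarTower R k N] (n : ℕ) :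
    Subsingleton (Abelian.Ext (ModuleCat.of R C) (ModuleCat.of R N) (n + 1)) := by
  have : Projective (ModuleCat.of k (k ⊗[R] C)) :=
    (IsProjective.iff_projective (k ⊗[R] C)).mp inferInstance
  exact subsingleton_ext_of_baseChange (A := k) C N (n + 1)
    (subsingleton_of_forall_eq 0 Abelian.Ext.eq_zero_of_projective)

end FlatBaseChange

section FlatExtension

variable {R V M : Type*} [CommRing R] [AddCommGroup V] [Module R V] [AddCommGroup M] [Module R M]

theorem flat_sSup_of_directedOn {c : Set (Submodule R V)} (hne : c.Nonempty)
    (hdir : DirectedOn (· ≤ ·) c) (h : ∀ D ∈ c, Module.Flat R D) :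
    Module.Flat R (sSup c : Submodule R V) := by
  refine Module.Flat.of_forall_isTrivialRelation fun {l f x} hx ↦ ?_
  obtain ⟨D, hD, hxD⟩ : ∃ D ∈ c, ∀ i, (x i : V) ∈ D := by
    choose E hE hxE using fun i ↦ (Submodule.mem_sSup_of_directed hne hdir).mp (x i).2
    have := hne.to_subtype
    obtain ⟨D, hD⟩ := (directedOn_iff_directed.mp hdir).finite_le fun i ↦ (⟨E i, hE i⟩ : c)
    exact ⟨D.1, D.2, fun i ↦ hD i (hxE i)⟩
  have := h D hD
  have hxD_sum : ∑ i, f i • (⟨x i, hxD i⟩ : D) = 0 :=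
    Subtype.ext (by simpa using congr(($hx : V)))
  obtain ⟨k, a, y, hy, ha⟩ := Module.Flat.isTrivialRelation_of_sum_smul_eq_zero hxD_sum
  refine ⟨k, a, fun j ↦ ⟨y j, le_sSup hD (y j).2⟩, fun i ↦ Subtype.ext ?_, ha⟩
  simpa using congr(($(hy i) : V))

theorem exists_maximal_linearPMap_of_flat (f : V →ₗ.[R] M) (hf : Module.Flat R f.domain) :
    ∃ m, f ≤ m ∧ Maximal (fun g : V →ₗ.[R] M ↦ Module.Flat R g.domain) m := by
  refine zorn_le_nonempty₀ {g : V →ₗ.[R] M | Module.Flat R g.domain}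
    (fun c hc hchain g hg ↦ ?_) f hf
  refine ⟨LinearPMap.sSup c hchain.directedOn, ?_, fun _ ↦ LinearPMap.le_sSup _⟩
  refine flat_sSup_of_directedOn (Set.Nonempty.image _ ⟨g, hg⟩)
    (directedOn_image.mpr (hchain.directedOn.mono fun _ _ h ↦ h.1)) ?_
  rintro _ ⟨g, hg, rfl⟩
  exact hc hg

theorem mem_domain_of_smul_mem_of_maximal {m : V →ₗ.[R] M}
    (hm : Maximal (fun g : V →ₗ.[R] M ↦ Module.Flat R g.domain) m) {s : R}
    (hs : Function.Bijective fun v : V ↦ s • v) {g : m.domain →ₗ[R] M} (hg : m.toFun = s • g)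
    {v : V} (hv : s • v ∈ m.domain) : v ∈ m.domain := by
  let e := (LinearEquiv.ofBijective (LinearMap.lsmul R V s) hs).ofSubmodule' m.domain
  let m' : V →ₗ.[R] M := ⟨_, g ∘ₗ e.toLinearMap⟩
  have : Module.Flat R m.domain := hm.prop
  have hm' : Module.Flat R m'.domain := Module.Flat.of_linearEquiv e
  have hle : m ≤ m' := by
    refine ⟨fun x hx ↦ m.domain.smul_mem s hx, fun x y hxy ↦ ?_⟩
    have hey : e y = s • x := Subtype.ext congr(s • $hxy.symm)
    change m.toFun x = g (e y)
    rw [hey, hg, map_smul, LinearMap.smul_apply]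
  exact (hm.le_of_ge hm' hle).1 hv

theorem exists_extension_of_restrictScalars_eq {K : Type*} [Field K] [Algebra R K] [Module K V]
    [IsScalarTower R K V] {W : Submodule K V} {m : V →ₗ.[R] M}
    (hW : W.restrictScalars R = m.domain) : ∃ g : V →ₗ[R] M, g ∘ₗ m.domain.subtype = m.toFun := by
  obtain ⟨π, hπ⟩ := W.subtype.exists_leftInverse_of_injective W.ker_subtype
  refine ⟨m.toFun ∘ₗ (LinearEquiv.ofEq _ _ hW).toLinearMap ∘ₗ
    (W.restrictScalarsEquiv R K V).symm.toLinearMap ∘ₗ π.restrictScalars R, ?_⟩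
  ext x
  have hx : (x : V) ∈ W.restrictScalars R := hW.ge x.2
  exact congrArg m.toFun (Subtype.ext congr(($hπ ⟨x, hx⟩ : V)))

end FlatExtension

section FractionField

variable {R : Type*} [CommRing R] [IsDomain R] (K : Type*) [Field K] [Algebra R K]
  [IsFractionRing R K]

theorem exists_restrictScalars_eq_of_forall_smul_mem {V : Type*} [AddCommGroup V] [Module R V]
    [Module K V] [IsScalarTower R K V] (D : Submodule R V)
    (hD : ∀ s : R, s ≠ 0 → ∀ v : V, s • v ∈ D → v ∈ D) :
    ∃ W : Submodule K V, W.restrictScalars R = D := by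
  refine ⟨{ D with smul_mem' := fun k v hv ↦ ?_ }, rfl⟩
  obtain ⟨a, b, hb, rfl⟩ := IsFractionRing.div_surjective (A := R) k
  have hbK : algebraMap R K b ≠ 0 := by simpa using nonZeroDivisors.ne_zero hb
  refine hD b (nonZeroDivisors.ne_zero hb) _ ?_
  rw [← algebraMap_smul K, smul_smul, mul_div_cancel₀ _ hbK, algebraMap_smul]
  exact D.smul_mem a hv

-- Zorn's lemma extends `f` to a maximal flat submodule of `V`. Divisibility forces that submodule
-- to be closed under division, so it is a `K`-subspace and has a complement.
theorem exists_comp_eq_of_forall_divisible {V : Type v} {M : Type*} [AddCommGroup V] [Module R V]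
    [Module K V] [IsScalarTower R K V] [AddCommGroup M] [Module R M]
    (hM : ∀ (C : Type v) [AddCommGroup C] [Module R C] [Module.Flat R C] (s : R), s ≠ 0 →
      ∀ f : C →ₗ[R] M, ∃ g : C →ₗ[R] M, f = s • g)
    {F : Type*} [AddCommGroup F] [Module R F] [Module.Flat R F] {i : F →ₗ[R] V}
    (hi : Function.Injective i) (f : F →ₗ[R] M) : ∃ g : V →ₗ[R] M, g ∘ₗ i = f := by
  let e : F ≃ₗ[R] LinearMap.range i := LinearEquiv.ofInjective i hi
  obtain ⟨m, hfm, hm⟩ := exists_maximal_linearPMap_of_flat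
    (⟨LinearMap.range i, f ∘ₗ e.symm.toLinearMap⟩ : V →ₗ.[R] M) (Module.Flat.of_linearEquiv e.symm)
  have hdiv (s : R) (hs : s ≠ 0) (v : V) (hv : s • v ∈ m.domain) : v ∈ m.domain := by
    have : Module.Flat R m.domain := hm.prop
    have hsK : algebraMap R K s ≠ 0 := by simpa using hs
    obtain ⟨g, hg⟩ := hM m.domain s hs m.toFun
    refine mem_domain_of_smul_mem_of_maximal hm ?_ hg hv
    simpa only [algebraMap_smul] using MulAction.bijective₀ (α := V) hsK
  obtain ⟨W, hW⟩ := exists_restrictScalars_eq_of_forall_smul_mem K m.domain hdiv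
  obtain ⟨g, hg⟩ := exists_extension_of_restrictScalars_eq hW
  refine ⟨g, LinearMap.ext fun x ↦ ?_⟩
  calc g (i x) = m.toFun ⟨i x, hfm.1 (e x).2⟩ := LinearMap.congr_fun hg ⟨i x, hfm.1 (e x).2⟩
    _ = f (e.symm (e x)) := (hfm.2 (x := e x) rfl).symm
    _ = f x := by rw [e.symm_apply_apply]

end FractionField

/-- The `R`-modules `Ext^i(C, M)`, for `C` flat, are all divisible: multiplication on them by any
nonzero scalar is surjective. Over a domain this forces `Ext^(i+1)(C, M) = 0` for `C` flat. -/
def FlatExtDivisible {R : Type u} [CommRing R] (M : ModuleCat.{u} R) (i : ℕ) : Prop :=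
  ∀ (C : Type u) [AddCommGroup C] [Module R C] [Module.Flat R C] (s : R), s ≠ 0 →
    ∀ e : Abelian.Ext (ModuleCat.of R C) M i, ∃ g : Abelian.Ext (ModuleCat.of R C) M i, e = s • g

namespace FlatExtDivisible

variable {R : Type u} [CommRing R]

theorem exists_eq_smul_linearMap {M : ModuleCat.{u} R}
    (hM : FlatExtDivisible M 0) (C : Type u) [AddCommGroup C] [Module R C] [Module.Flat R C]
    (s : R) (hs : s ≠ 0) (f : C →ₗ[R] M) : ∃ g : C →ₗ[R] M, f = s • g := by
  obtain ⟨g, hg⟩ := hM C s hs (Abelian.Ext.mk₀ (ModuleCat.ofHom f))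
  obtain ⟨g, rfl⟩ := (Abelian.Ext.mk₀_bijective _ _).surjective g
  rw [← Abelian.Ext.mk₀_smul] at hg
  exact ⟨g.hom, congr($((Abelian.Ext.mk₀_bijective _ _).injective hg).hom)⟩

variable [IsDomain R]

theorem of_injective (I : ModuleCat.{u} R) [Injective I] (i : ℕ) : FlatExtDivisible I i := by
  intro C _ _ _ s hs e
  cases i with
  | succ i => exact ⟨0, by rw [Abelian.Ext.eq_zero_of_injective e, smul_zero]⟩
  | zero =>
    obtain ⟨f, rfl⟩ := (Abelian.Ext.mk₀_bijective _ _).surjective e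
    have : Mono (s • 𝟙 (ModuleCat.of R C)) := (ModuleCat.mono_iff_injective _).mpr
      (Module.Flat.isSMulRegular_of_nonZeroDivisors (mem_nonZeroDivisors_of_ne_zero hs))
    let g := Injective.factorThru f (s • 𝟙 (ModuleCat.of R C))
    have hg : s • g = f := by
      simpa only [Linear.smul_comp, Category.id_comp] using
        Injective.comp_factorThru f (s • 𝟙 (ModuleCat.of R C))
    exact ⟨Abelian.Ext.mk₀ g, by rw [← Abelian.Ext.mk₀_smul, hg]⟩

theorem subsingleton_one {M : ModuleCat.{u} R} (hM : FlatExtDivisible M 0) (C : Type u)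
    [AddCommGroup C] [Module R C] [Module.Flat R C] :
    Subsingleton (Abelian.Ext (ModuleCat.of R C) M 1) := by
  let p : (C →₀ R) →ₗ[R] C := Finsupp.linearCombination R id
  have hp : Function.Surjective p := Finsupp.linearCombination_id_surjective R C
  have : Module.Flat R (LinearMap.ker p) := flat_ker_of_surjective hp
  have : Projective p.shortComplexKer.X₂ :=
    (IsProjective.iff_projective (C →₀ R)).mp inferInstance
  refine (subsingleton_ext_one_iff_of_projective (LinearMap.shortExact_shortComplexKer hp) _).mpr
    fun f ↦ ?_
  let K := FractionRing R
  let j : (C →₀ R) →ₗ[R] (C →₀ K) := Finsupp.mapRange.linearMap (Algebra.linearMap R K)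
  have hj : Function.Injective j :=
    Finsupp.mapRange_injective _ (map_zero _) (IsFractionRing.injective R K)
  obtain ⟨g, hg⟩ := exists_comp_eq_of_forall_divisible K hM.exists_eq_smul_linearMap
    (i := j ∘ₗ (LinearMap.ker p).subtype) (hj.comp Subtype.val_injective) f.hom
  exact ⟨ModuleCat.ofHom (g ∘ₗ j), ModuleCat.hom_ext hg⟩

theorem X₃_of_injective {T : ShortComplex (ModuleCat.{u} R)} (hT : T.ShortExact)
    [Injective T.X₂] {i : ℕ} (h₁ : FlatExtDivisible T.X₁ (i + 1)) : FlatExtDivisible T.X₃ i := by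
  intro C _ _ _ s hs e
  obtain ⟨g, hg⟩ := h₁ C s hs (e.comp hT.extClass rfl)
  obtain ⟨g, rfl⟩ := Abelian.Ext.covariant_sequence_exact₁ _ hT g
    (Abelian.Ext.eq_zero_of_injective _) rfl
  have he : (e - s • g).comp hT.extClass rfl = 0 := by
    rw [sub_eq_add_neg, Abelian.Ext.add_comp, Abelian.Ext.neg_comp, Abelian.Ext.smul_comp, hg,
      add_neg_cancel]
  obtain ⟨y, hy⟩ := Abelian.Ext.covariant_sequence_exact₃ _ hT _ rfl he
  obtain ⟨z, rfl⟩ := of_injective T.X₂ i C s hs y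
  refine ⟨z.comp (Abelian.Ext.mk₀ T.g) (add_zero i) + g, ?_⟩
  rw [smul_add, ← Abelian.Ext.smul_comp, hy, sub_add_cancel]

theorem subsingleton_succ {M : ModuleCat.{u} R} {i : ℕ} (hM : FlatExtDivisible M i) (C : Type u)
    [AddCommGroup C] [Module R C] [Module.Flat R C] :
    Subsingleton (Abelian.Ext (ModuleCat.of R C) M (i + 1)) := by
  induction i generalizing M with
  | zero => exact hM.subsingleton_one C
  | succ i ih =>
    let T := ShortComplex.mk (Injective.ι M) (Limits.cokernel.π (Injective.ι M))
      (Limits.cokernel.condition _)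
    have hT : T.ShortExact := { exact := ShortComplex.exact_cokernel _ }
    have : Injective T.X₂ := inferInstanceAs (Injective (Injective.under M))
    exact subsingleton_ext_X₁_of_injective hT _ _ (ih (X₃_of_injective hT hM))

end FlatExtDivisible

section DimensionBound

theorem subsingleton_ext_of_forall_quotient_prime {R : Type u} [CommRing R] [IsNoetherianRing R]
    (X : ModuleCat.{u} R) (n : ℕ)
    (h : ∀ p : PrimeSpectrum R, Subsingleton (Abelian.Ext X (ModuleCat.of R (R ⧸ p.1)) n))
    (M : Type u) [AddCommGroup M] [Module R M] [hM : Module.Finite R M] :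
    Subsingleton (Abelian.Ext X (ModuleCat.of R M) n) := by
  induction hM using IsNoetherianRing.induction_on_isQuotientEquivQuotientPrime R with
  | subsingleton N => exact subsingleton_ext_of_isZero (ModuleCat.isZero_of_subsingleton _) X n
  | quotient N p e => exact (subsingleton_ext_congr_of_iso e.toModuleIso X n).mpr (h p)
  | exact N₁ N₂ N₃ f g hf hg hfg h₁ h₃ =>
    exact subsingleton_ext_X₂ (ModuleCat.shortComplex_shortExact
      (ModuleCat.shortComplexOfCompEqZero f g hfg.linearMap_comp_eq_zero) hfg hf hg) X n h₁ h₃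

theorem exists_eq_smul_ext_of_isSMulRegular {R : Type u} [CommRing R] {X M : ModuleCat.{u} R}
    {s : R} (hs : IsSMulRegular M s) (n : ℕ)
    (h : Subsingleton (Abelian.Ext X (ModuleCat.of R (QuotSMulTop s M)) n))
    (e : Abelian.Ext X M n) : ∃ g : Abelian.Ext X M n, e = s • g := by
  obtain ⟨g, hg⟩ := Abelian.Ext.covariant_sequence_exact₂ X hs.smulShortComplex_shortExact e
    (Subsingleton.elim (h := h) _ _)
  exact ⟨g, hg.symm.trans (Abelian.Ext.smul_eq_comp_mk₀ (Y := M) g s).symm⟩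

theorem subsingleton_ext_of_supportDim_lt {R : Type u} [CommRing R] [IsNoetherianRing R]
    (C M : Type u) [AddCommGroup C] [Module R C] [Module.Flat R C] [AddCommGroup M] [Module R M]
    [Module.Finite R M] {i : ℕ} (hi : Module.supportDim R M < i) :
    Subsingleton (Abelian.Ext (ModuleCat.of R C) (ModuleCat.of R M) i) := by
  induction i generalizing R C M with
  | zero =>
    have : Subsingleton M := (Module.supportDim_eq_bot_iff_subsingleton R M).mp
      (WithBot.lt_coe_bot.mp hi)
    exact subsingleton_ext_of_isZero (ModuleCat.isZero_of_subsingleton _) _ _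
  | succ i ih =>
    let A := R ⧸ Module.annihilator R M
    let _ : Module A M := Module.quotientAnnihilator
    have : IsScalarTower R A M := Module.IsTorsionBySet.isScalarTower _
    refine subsingleton_ext_of_baseChange (A := A) C M (i + 1) ?_
    have : Module.Finite A M := Module.Finite.of_restrictScalars_finite R _ _
    refine subsingleton_ext_of_forall_quotient_prime _ (i + 1) (fun p ↦ ?_) M
    have := p.2
    let B := A ⧸ p.1
    refine subsingleton_ext_of_baseChange (A := B) _ B (i + 1) ?_
    refine FlatExtDivisible.subsingleton_succ (fun D _ _ _ s hs ↦ ?_) _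
    have hsreg : IsSMulRegular B s := (IsRegular.of_ne_zero hs).left.isSMulRegular
    have hdim : Module.supportDim B (QuotSMulTop s B) + 1 < i + 1 := calc
      _ ≤ Module.supportDim B B :=
        Module.supportDim_quotSMulTop_succ_le_of_notMem_minimalPrimes
          fun _ ↦ hsreg.notMem_of_mem_minimalPrimes
      _ = ringKrullDim B := Module.supportDim_self_eq_ringKrullDim B
      _ ≤ ringKrullDim A := ringKrullDim_quotient_le p.1
      _ = Module.supportDim R M := (Module.supportDim_eq_ringKrullDim_quotient_annihilator R M).symm
      _ < i + 1 := mod_cast hi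
    exact exists_eq_smul_ext_of_isSMulRegular (M := ModuleCat.of B B) hsreg i
      (ih D (QuotSMulTop s B) (lt_of_add_lt_add_right hdim))

end DimensionBound

section LocalInduction

theorem induction_on_quotient {R : Type*} [Ring R]
    {motive : (N : Type v) → [AddCommGroup N] → [Module R N] → [IsNoetherian R N] → Prop}
    (h : ∀ (N : Type v) [AddCommGroup N] [Module R N] [IsNoetherian R N],
      (∀ L : Submodule R N, L ≠ ⊥ → motive (N ⧸ L)) → motive N)
    (M : Type v) [AddCommGroup M] [Module R M] [IsNoetherian R M] : motive M := by
  suffices H : ∀ (K : Submodule R M) (N : Type v) [AddCommGroup N] [Module R N] [IsNoetherian R N]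
      (q : M →ₗ[R] N), Function.Surjective q → LinearMap.ker q = K → motive N from
    H ⊥ M LinearMap.id Function.surjective_id LinearMap.ker_id
  intro K
  induction K using WellFoundedGT.induction with
  | ind K ih =>
    intro N _ _ _ q hq hK
    refine h N fun L hL ↦ ih (L.comap q) ?_ (N ⧸ L) (L.mkQ ∘ₗ q) (L.mkQ_surjective.comp hq)
      (by rw [LinearMap.ker_comp, Submodule.ker_mkQ])
    rw [← hK, ← Submodule.comap_bot]
    exact Submodule.comap_strictMono_of_surjective hq (bot_lt_iff_ne_bot.mpr hL)

variable {R : Type*} [CommRing R] [IsLocalRing R]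

instance isSimpleModule_residueField : IsSimpleModule R (ResidueField R) :=
  isSimpleModule_iff_quot_maximal.mpr ⟨maximalIdeal R, inferInstance, ⟨LinearEquiv.refl _ _⟩⟩

theorem exists_isSMulRegular_or_exists_injective_residueField [IsNoetherianRing R] (M : Type*)
    [AddCommGroup M] [Module R M] [Module.Finite R M] :
    (∃ x ∈ maximalIdeal R, IsSMulRegular M x) ∨
      ∃ f : ResidueField R →ₗ[R] M, Function.Injective f := by
  by_cases hM : Subsingleton (ResidueField R →ₗ[R] M)
  · obtain ⟨x, hx, hreg⟩ := IsSMulRegular.subsingleton_linearMap_iff.mp hM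
    refine .inl ⟨x, ?_, hreg⟩
    rw [← residue_eq_zero_iff, ← ResidueField.algebraMap_eq, Algebra.algebraMap_eq_smul_one]
    exact Module.mem_annihilator.mp hx 1
  · rw [not_subsingleton_iff_nontrivial] at hM
    obtain ⟨f, hf⟩ := exists_ne (0 : ResidueField R →ₗ[R] M)
    exact .inr ⟨f, LinearMap.injective_of_ne_zero hf⟩

-- Stated as an induction on `Module.Finite R M` rather than on `M` because of lean4#4246, like
-- `IsNoetherianRing.induction_on_isQuotientEquivQuotientPrime`.
@[elab_as_elim]
theorem induction_on_residueField_of_isSMulRegular [IsNoetherianRing R]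
    {motive : (N : Type v) → [AddCommGroup N] → [Module R N] → [Module.Finite R N] → Prop}
    (subsingleton : ∀ (N : Type v) [AddCommGroup N] [Module R N] [Module.Finite R N]
      [Subsingleton N], motive N)
    (residueField : ∀ (N : Type v) [AddCommGroup N] [Module R N] [Module.Finite R N]
      (f : ResidueField R →ₗ[R] N), Function.Injective f → motive (N ⧸ LinearMap.range f) →
      motive N)
    (regular : ∀ (N : Type v) [AddCommGroup N] [Module R N] [Module.Finite R N] (x : R),
      x ∈ maximalIdeal R → IsSMulRegular N x → motive (QuotSMulTop x N) → motive N)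
    ⦃M : Type v⦄ [AddCommGroup M] [Module R M] (_ : Module.Finite R M) : motive M := by
  refine induction_on_quotient (R := R) (motive := fun N _ _ _ ↦ motive N) (fun N _ _ _ ih ↦ ?_) M
  cases subsingleton_or_nontrivial N
  · exact subsingleton N
  obtain ⟨x, hx, hreg⟩ | ⟨f, hf⟩ := exists_isSMulRegular_or_exists_injective_residueField (R := R) N
  · refine regular N x hx hreg (ih _ ?_)
    obtain ⟨y, hy⟩ := exists_ne (0 : N)
    exact (Submodule.ne_bot_iff _).mpr ⟨x • y, Submodule.smul_mem_pointwise_smul y x ⊤ trivial,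
      fun hxy ↦ hy (hreg.right_eq_zero_of_smul hxy)⟩
  · refine residueField N f hf (ih _ fun hrange ↦ ?_)
    exact one_ne_zero (hf ((LinearMap.congr_fun (LinearMap.range_eq_bot.mp hrange) 1).trans
      (map_zero f).symm))

end LocalInduction

section NAK

variable {R : Type u} [CommRing R]

theorem shortExact_of_injective {K M : Type u} [AddCommGroup K] [AddCommGroup M] [Module R K]
    [Module R M] {f : K →ₗ[R] M} (hf : Function.Injective f) :
    (ModuleCat.shortComplexOfCompEqZero f (LinearMap.range f).mkQ
      (LinearMap.exact_map_mkQ_range f).linearMap_comp_eq_zero).ShortExact :=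
  ModuleCat.shortComplex_shortExact _ (LinearMap.exact_map_mkQ_range f) hf
    (Submodule.mkQ_surjective _)

theorem ideal_smul_top_eq_top_of_surjective {E E' : Type*} [AddCommGroup E] [AddCommGroup E']
    [Module R E] [Module R E'] {I : Ideal R} {f : E →ₗ[R] E'} (hf : Function.Surjective f)
    (hker : LinearMap.ker f ≤ I • ⊤) (hI : I • (⊤ : Submodule R E') = ⊤) :
    I • (⊤ : Submodule R E) = ⊤ := by
  rw [← sup_eq_left.mpr hker, ← Submodule.comap_map_eq, Submodule.map_smul'', Submodule.map_top,
    LinearMap.range_eq_top.mpr hf, hI, Submodule.comap_top]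

variable [IsLocalRing R]

theorem maximalIdeal_smul_ext_eq_top [IsNoetherianRing R] (C M : Type u) [AddCommGroup C]
    [Module R C] [Module.Flat R C] [AddCommGroup M] [Module R M] [hM : Module.Finite R M] (n : ℕ)
    (h : ∀ i > n + 1, Subsingleton (Abelian.Ext (ModuleCat.of R C) (ModuleCat.of R M) i)) :
    maximalIdeal R •
      (⊤ : Submodule R (Abelian.Ext (ModuleCat.of R C) (ModuleCat.of R M) (n + 1))) = ⊤ := by
  induction hM using induction_on_residueField_of_isSMulRegular with
  | subsingleton M =>
    have := subsingleton_ext_of_isZero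
      (ModuleCat.isZero_of_subsingleton (ModuleCat.of R M)) (ModuleCat.of R C) (n + 1)
    exact Subsingleton.elim _ _
  | residueField M f hf ih =>
    have hT := shortExact_of_injective hf
    have hk := subsingleton_ext_succ_of_field (R := R) (ResidueField R) C (ResidueField R)
    refine ideal_smul_top_eq_top_of_surjective
      (f := (Abelian.Ext.mk₀ (ModuleCat.ofHom (LinearMap.range f).mkQ)).postcompOfLinear R _
        (add_zero (n + 1))) (fun y ↦ ?_) (fun y hy ↦ ?_)
      (ih fun i hi ↦ subsingleton_ext_X₃ hT _ _ (h i hi) (hk i))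
    · exact Abelian.Ext.covariant_sequence_exact₃ _ hT y rfl (Subsingleton.elim (h := hk _) _ _)
    · obtain ⟨z, rfl⟩ := Abelian.Ext.covariant_sequence_exact₂ _ hT y hy
      rw [Subsingleton.elim (h := hk n) z 0, Abelian.Ext.zero_comp]
      exact zero_mem _
  | regular M x hx hreg ih =>
    have hT := IsSMulRegular.smulShortComplex_shortExact (M := ModuleCat.of R M) hreg
    refine ideal_smul_top_eq_top_of_surjective
      (f := (Abelian.Ext.mk₀ ((ModuleCat.of R M).smulShortComplex x).g).postcompOfLinear R _
        (add_zero (n + 1))) (fun y ↦ ?_) (fun y hy ↦ ?_)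
      (ih fun i hi ↦ subsingleton_ext_X₃ hT _ _ (h i hi) (h (i + 1) (by omega)))
    · exact Abelian.Ext.covariant_sequence_exact₃ _ hT y rfl
        (Subsingleton.elim (h := h _ (Nat.lt_succ_self _)) _ _)
    · obtain ⟨z, rfl⟩ := Abelian.Ext.covariant_sequence_exact₂ _ hT y hy
      exact Set.mem_of_eq_of_mem (Abelian.Ext.smul_eq_comp_mk₀ (Y := ModuleCat.of R M) z x).symm
        (Submodule.smul_mem_smul hx trivial)

/-- A module `N` over a local ring `R` satisfies NAK, the conclusion of Nakayama's lemma, if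
`N = 0` or `N / 𝔪 N ≠ 0`; the latter is stated as `𝔪 N ≠ N`. -/
def SatisfiesNAK (R N : Type*) [CommRing R] [IsLocalRing R] [AddCommGroup N] [Module R N] : Prop :=
  Subsingleton N ∨ maximalIdeal R • (⊤ : Submodule R N) ≠ ⊤

theorem SatisfiesNAK.of_linearEquiv {N N' : Type*} [AddCommGroup N] [Module R N] [AddCommGroup N']
    [Module R N'] (h : SatisfiesNAK R N) (e : N ≃ₗ[R] N') : SatisfiesNAK R N' :=
  h.imp e.toEquiv.subsingleton_congr.mp fun hN hN' ↦ hN <|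
    ideal_smul_top_eq_top_of_surjective (f := e.toLinearMap) e.surjective
      (e.ker.trans_le bot_le) hN'

theorem subsingleton_ext_of_satisfiesNAK [IsNoetherianRing R] (C M : Type u) [AddCommGroup C]
    [Module R C] [Module.Flat R C] [AddCommGroup M] [Module R M] [Module.Finite R M]
    (h : ∀ i : ℕ, 1 ≤ i → i ≤ Module.supportDim R M →
      SatisfiesNAK R (Abelian.Ext (ModuleCat.of R C) (ModuleCat.of R M) i)) (i : ℕ) (hi : 1 ≤ i) :
    Subsingleton (Abelian.Ext (ModuleCat.of R C) (ModuleCat.of R M) i) := by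
  obtain ⟨d, hd⟩ : ∃ d : ℕ, Module.supportDim R M ≤ d := by
    obtain ⟨d, hd⟩ := ENat.ne_top_iff_exists.mp
      (Ideal.height_ne_top (Ideal.IsPrime.ne_top' (I := maximalIdeal R)))
    refine ⟨d, (Module.supportDim_le_ringKrullDim R M).trans_eq ?_⟩
    rw [← maximalIdeal_height_eq_ringKrullDim, ← hd]
    rfl
  induction i using Nat.strong_decreasing_induction with
  | base => exact ⟨d, fun i hi _ ↦ subsingleton_ext_of_supportDim_lt C M
      (hd.trans_lt (mod_cast hi))⟩
  | step i ih =>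
    obtain ⟨n, rfl⟩ := Nat.exists_eq_add_of_le' hi
    obtain hlt | hle := lt_or_ge (Module.supportDim R M) (n + 1 : ℕ)
    · exact subsingleton_ext_of_supportDim_lt C M hlt
    · exact (h (n + 1) hi hle).resolve_right fun hne ↦
        hne (maximalIdeal_smul_ext_eq_top C M n fun j hj ↦ ih j hj (by omega))

end NAK

section Evaluation

open TensorProduct

variable {R : Type u} [CommRing R]

theorem exists_apply_eq_of_injective_tmul {k C : Type*} [Field k] [Algebra R k] [AddCommGroup C]
    [Module R C] {c : C} (hc : Function.Injective fun a : k ↦ a ⊗ₜ[R] c) (a : k) :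
    ∃ f : C →ₗ[R] k, f c = a := by
  obtain ⟨g, hg⟩ :=
    (LinearMap.toSpanSingleton k (k ⊗[R] C) (1 ⊗ₜ c)).exists_leftInverse_of_injective
      (LinearMap.ker_eq_bot.mpr fun x y hxy ↦ hc (by simpa [smul_tmul'] using hxy))
  have hg1 : g (1 ⊗ₜ c) = 1 := by simpa using congr($hg 1)
  exact ⟨a • g.restrictScalars R ∘ₗ TensorProduct.mk R k C 1, by simp [hg1]⟩

variable [IsLocalRing R]

theorem eq_zero_of_apply_eq_zero_of_surjective_tmul {C M : Type*} [AddCommGroup C] [Module R C]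
    [AddCommGroup M] [Module R M] [IsNoetherian R M] {c : C}
    (hc : Function.Surjective fun a : ResidueField R ↦ a ⊗ₜ[R] c) {f : C →ₗ[R] M}
    (hf : f c = 0) : f = 0 := by
  have hfc : f.rangeRestrict c = 0 := Subtype.ext hf
  have hsurj := LinearMap.lTensor_surjective (ResidueField R) f.surjective_rangeRestrict
  have hrange : Subsingleton (ResidueField R ⊗[R] LinearMap.range f) := by
    refine subsingleton_of_forall_eq 0 fun y ↦ ?_
    obtain ⟨z, rfl⟩ := hsurj y
    obtain ⟨a, rfl⟩ := hc z
    rw [LinearMap.lTensor_tmul, hfc, tmul_zero]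
  rwa [subsingleton_tensorProduct, Submodule.subsingleton_iff_eq_bot,
    LinearMap.range_eq_bot] at hrange

theorem exists_apply_eq_of_subsingleton_ext [IsNoetherianRing R] {C M : Type u} [AddCommGroup C]
    [Module R C] [Module.Flat R C] [AddCommGroup M] [Module R M] [hM : Module.Finite R M] {c : C}
    (hc : Function.Injective fun a : ResidueField R ↦ a ⊗ₜ[R] c)
    (h : ∀ n, Subsingleton (Abelian.Ext (ModuleCat.of R C) (ModuleCat.of R M) (n + 1))) (y : M) :
    ∃ f : C →ₗ[R] M, f c = y := by
  induction hM using induction_on_residueField_of_isSMulRegular with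
  | subsingleton M => exact ⟨0, Subsingleton.elim _ _⟩
  | residueField M f hf ih =>
    have hT := shortExact_of_injective hf
    have hk := subsingleton_ext_succ_of_field (R := R) (ResidueField R) C (ResidueField R)
    obtain ⟨g', hg'⟩ := ih (fun n ↦ subsingleton_ext_X₃ hT _ _ (h n) (hk (n + 1)))
      ((LinearMap.range f).mkQ y)
    obtain ⟨g, hg⟩ := exists_lift_of_subsingleton_ext_one hT (hk 0) (ModuleCat.ofHom g')
    have hgc : (LinearMap.range f).mkQ (g.hom c) = (LinearMap.range f).mkQ y :=
      congr($(hg).hom c).trans hg'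
    obtain ⟨a, ha⟩ := (Submodule.Quotient.eq _).mp hgc.symm
    obtain ⟨l, rfl⟩ := exists_apply_eq_of_injective_tmul hc a
    refine ⟨g.hom + f ∘ₗ l, ?_⟩
    rw [LinearMap.add_apply, LinearMap.comp_apply, ha]
    exact add_sub_cancel _ _
  | regular M x hx hreg ih =>
    have hT := IsSMulRegular.smulShortComplex_shortExact (M := ModuleCat.of R M) hreg
    let V := LinearMap.range (LinearMap.applyₗ (R := R) (M₂ := M) c)
    suffices hV : (⊤ : Submodule R M) ≤ V from hV (Submodule.mem_top (x := y))
    refine Submodule.le_of_le_smul_of_le_jacobson_bot (I := maximalIdeal R)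
      (IsNoetherian.noetherian _) (IsLocalRing.maximalIdeal_le_jacobson _) fun y _ ↦ ?_
    obtain ⟨g', hg'⟩ := ih (fun n ↦ subsingleton_ext_X₃ hT _ _ (h n) (h (n + 1)))
      (Submodule.Quotient.mk y)
    obtain ⟨g, hg⟩ := exists_lift_of_subsingleton_ext_one hT (h 0) (ModuleCat.ofHom g')
    let f : C →ₗ[R] M := g.hom
    have hfc : (Submodule.Quotient.mk (f c) : QuotSMulTop x M) = Submodule.Quotient.mk y :=
      congr($(hg).hom c).trans hg'
    obtain ⟨z, -, hz⟩ := (Submodule.Quotient.eq _).mp hfc.symm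
    refine Submodule.mem_sup.mpr ⟨f c, ⟨f, rfl⟩, x • z, Submodule.smul_mem_smul hx trivial, ?_⟩
    exact (congrArg (f c + ·) hz).trans (add_sub_cancel _ _)

theorem bijective_apply_of_subsingleton_ext [IsNoetherianRing R] {C M : Type u} [AddCommGroup C]
    [Module R C] [Module.Flat R C] [AddCommGroup M] [Module R M] [Module.Finite R M] {c : C}
    (hc : Function.Bijective fun a : ResidueField R ↦ a ⊗ₜ[R] c)
    (h : ∀ n, Subsingleton (Abelian.Ext (ModuleCat.of R C) (ModuleCat.of R M) (n + 1))) :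
    Function.Bijective (LinearMap.applyₗ (R := R) (M₂ := M) c) :=
  ⟨LinearMap.ker_eq_bot.mp (LinearMap.ker_eq_bot'.mpr fun _ ↦
    eq_zero_of_apply_eq_zero_of_surjective_tmul hc.surjective),
    exists_apply_eq_of_subsingleton_ext hc.injective h⟩

end Evaluation

section ModuleStructure

theorem exists_module_isScalarTower_of_bijective_apply_one {R S M : Type*} [CommRing R] [Ring S]
    [Algebra R S] [AddCommGroup M] [Module R M]
    (h : Function.Bijective (LinearMap.applyₗ (R := R) (M₂ := M) (1 : S))) :
    ∃ _ : Module S M, IsScalarTower R S M := by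
  let e : (S →ₗ[R] M) ≃ₗ[R] M := LinearEquiv.ofBijective _ h
  have apply_one (y : M) : e.symm y 1 = y := e.apply_symm_apply y
  have mulRight (t : S) (y : M) :
      e.symm (e.symm y t) = e.symm y ∘ₗ LinearMap.mulRight R t :=
    e.symm_apply_eq.mpr (congrArg (e.symm y) (one_mul t).symm)
  let _ : Module S M :=
    { smul := fun s y ↦ e.symm y s
      one_smul := apply_one
      mul_smul := fun s t y ↦ congr($(mulRight t y) s).symm
      smul_zero := fun s ↦ congr($(map_zero e.symm) s)
      smul_add := fun s y z ↦ congr($(map_add e.symm y z) s)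
      add_smul := fun s t y ↦ map_add (e.symm y) s t
      zero_smul := fun y ↦ map_zero (e.symm y) }
  exact ⟨inferInstance, ⟨fun r s y ↦ map_smul (e.symm y) r s⟩⟩

theorem HasCompatibleModuleStructure.of_isScalarTower {R S M : Type} [CommRing R] [CommRing S]
    [Algebra R S] [AddCommGroup M] [Module R M] [hmod : Module S M] [IsScalarTower R S M] :
    HasCompatibleModuleStructure R S M :=
  ⟨hmod, algebraMap_smul S⟩

end ModuleStructure

section LocalHom

open TensorProduct

theorem bijective_tmul_one_of_bijective_residueFieldMap {R S : Type*} [CommRing R] [CommRing S]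
    [IsLocalRing R] [IsLocalRing S] [Algebra R S] [IsLocalHom (algebraMap R S)]
    (hmax : (maximalIdeal R).map (algebraMap R S) = maximalIdeal S)
    (hres : Function.Bijective (ResidueField.map (algebraMap R S))) :
    Function.Bijective fun a : ResidueField R ↦ a ⊗ₜ[R] (1 : S) := by
  have hsmul : maximalIdeal R • (⊤ : Submodule R S) = (maximalIdeal S).restrictScalars R := by
    rw [Ideal.smul_top_eq_map, hmax]
  let e : ResidueField R ⊗[R] S ≃ₗ[R] ResidueField S :=
    quotTensorEquivQuotSMul S (maximalIdeal R) ≪≫ₗ Submodule.quotEquivOfEq _ _ hsmul ≪≫ₗ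
      Submodule.Quotient.restrictScalarsEquiv R (maximalIdeal S)
  have he : e ∘ (· ⊗ₜ[R] (1 : S)) = ResidueField.map (algebraMap R S) := funext fun a ↦ by
    obtain ⟨r, rfl⟩ := residue_surjective a
    exact congrArg (residue S) (Algebra.algebraMap_eq_smul_one r).symm
  exact (e.bijective.of_comp_iff' _).mp (he ▸ hres)

end LocalHom

open TensorProduct in
theorem stmt_19_general {R S M : Type u} [CommRing R] [IsNoetherianRing R] [IsLocalRing R] [Ring S]
    [Algebra R S] [Module.Flat R S]
    (hres : Function.Bijective fun a : ResidueField R ↦ a ⊗ₜ[R] (1 : S))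
    [AddCommGroup M] [Module R M] [Module.Finite R M]
    (hNAK : ∀ i : ℕ, 1 ≤ i → i ≤ ringKrullDim (R ⧸ Module.annihilator R M) →
      SatisfiesNAK R (((Ext R (ModuleCat R) i).obj (Opposite.op (ModuleCat.of R S))).obj
        (ModuleCat.of R M))) :
    (∀ i : ℕ, 1 ≤ i → Subsingleton
      (((Ext R (ModuleCat R) i).obj (Opposite.op (ModuleCat.of R S))).obj (ModuleCat.of R M))) ∧
    ∃ _ : Module S M, IsScalarTower R S M := by
  let equiv (n : ℕ) := extLinearEquiv (R := R) (ModuleCat.of R S) (ModuleCat.of R M) n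
  have hExt (n : ℕ) :
      Subsingleton (Abelian.Ext (ModuleCat.of R S) (ModuleCat.of R M) (n + 1)) := by
    refine subsingleton_ext_of_satisfiesNAK S M (fun i hi hle ↦ ?_) (n + 1) n.succ_pos
    obtain ⟨j, rfl⟩ := Nat.exists_eq_add_of_le' hi
    rw [Module.supportDim_eq_ringKrullDim_quotient_annihilator] at hle
    exact (hNAK (j + 1) hi hle).of_linearEquiv (equiv j)
  refine ⟨fun i hi ↦ ?_, exists_module_isScalarTower_of_bijective_apply_one
    (bijective_apply_of_subsingleton_ext hres hExt)⟩
  obtain ⟨n, rfl⟩ := Nat.exists_eq_add_of_le' hi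
  exact (equiv n).toEquiv.subsingleton_congr.mpr (hExt n)

/-- Let `φ : (R, m) → (S, mS)` be a flat local homomorphism of commutative noetherian local
rings inducing an isomorphism `R/m → S/mS`, and let `M` be a finitely generated `R`-module.
If `Ext^i_R(S, M)` satisfies NAK for `i = 1, …, dim_R M` (where `dim_R M = dim (R/Ann_R M)`,
and an `R`-module `N` satisfies NAK if `N = 0` or `N/mN ≠ 0`), then `Ext^i_R(S, M) = 0` for
all `i ≥ 1` and `M` admits an `S`-module structure compatible with its `R`-module structure
via `φ`. -/
theorem stmt_19 (R S M : Type) [CommRing R] [CommRing S] [IsNoetherianRing R] [IsNoetherianRing S]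
    [IsLocalRing R] [IsLocalRing S] [Algebra R S] [Module.Flat R S]
    [IsLocalHom (algebraMap R S)]
    (hmax : (maximalIdeal R).map (algebraMap R S) = maximalIdeal S)
    (hres : Function.Bijective (ResidueField.map (algebraMap R S)))
    [AddCommGroup M] [Module R M] [Module.Finite R M]
    (hNAK : ∀ i : ℕ, 1 ≤ i →
      ((i : ℕ∞) : WithBot ℕ∞) ≤ ringKrullDim (R ⧸ Module.annihilator R M) →
      (Subsingleton
          (((Ext R (ModuleCat R) i).obj (Opposite.op (ModuleCat.of R S))).obj
            (ModuleCat.of R M)) ∨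
        (maximalIdeal R) •
            (⊤ : Submodule R
              (((Ext R (ModuleCat R) i).obj (Opposite.op (ModuleCat.of R S))).obj
                (ModuleCat.of R M))) ≠ ⊤)) :
    (∀ i : ℕ, 1 ≤ i → Subsingleton
      (((Ext R (ModuleCat R) i).obj (Opposite.op (ModuleCat.of R S))).obj
        (ModuleCat.of R M))) ∧
    HasCompatibleModuleStructure R S M := by
  obtain ⟨hExt, _, _⟩ :=
    stmt_19_general (bijective_tmul_one_of_bijective_residueFieldMap hmax hres) hNAK
  exact ⟨hExt, .of_isScalarTower⟩
end
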